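/- arXiv:1302.5860 — 2 statements merged into one kernel-verified Lean document; each statement's English description precedes it below -/
import Mathlib

section
/- Assume random encoder–decoder pairs are permitted. Let D ≥ 0 and let the compound channel 𝒜 be capable of communicating the i.i.d. X source to within distortion D under the additive distortion function d^n (probability-of-excess-distortion criterion, uniformly over k ∈ 𝒜). Then every rate R with 0 < R < R^P_X(D) is reliably achievable over 𝒜 with random codes (maximal error probability vanishing uniformly over k ∈ 𝒜). -/
/-!
# Why the theorem holds

Fix rates `R < R₁ < R₂ < RP pX d D`. The channel code draws its codewords independently from a
distribution `Q` on source blocks, sends them through the given source encoder, and decodes to the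
unique codeword within distortion `n * D` of the reproduction that the source decoder outputs
(`exists_channel_code`). It is reliable as soon as
* the end-to-end excess probability stays small when the source is distributed as `Q`, and
* every fixed reproduction is within distortion of only a `Q`-fraction `≪ 2 ^ (-n * R)` of blocks.

Both hold for `Q` the i.i.d. source conditioned on a suitable event. A greedy choice of at most
`K = nMsg R₁ n` reproductions leaves an uncovered set `U` in which no reproduction captures more
than `1 / K` of the source probability (`greedy_cover`). If `U` has probability at least `ε₀`, then
conditioning on `U` increases probabilities by a factor at most `1 / ε₀`, so the error probability
is at most `(ω n + nMsg R n / K) / ε₀` for every channel of `𝒜` (`exists_code_at`).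

It remains to bound the probability of `U` below, uniformly in large `n`. Otherwise there are
arbitrarily large block lengths `n₀` at which `nMsg R₁ n₀` reproductions cover nearly all of the
source, and `boost` turns these into source codes of rate `R₂` at *every* large block length,
against `R₂ < RP pX d D`. For this, a long block is cut into blocks of length `n₀`. Few of them are
uncovered, and these are reproduced letter by letter with the best possible letter, at a small cost
in rate. The resulting loss in distortion is made up on a small fraction of further letters, which
are also reproduced letter by letter. The needed slack is available because the letterwise
reproduction is at least as good as the output of the communication system, hence meets `D` with
probability tending to one (`letterwise_tendsto`): then its mean distortion is below `D`, or its
distortion is exactly `D` on the support of the source (`hasSlack_of_tendsto`). The remaining case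
is excluded by a fourth-moment bound (`anticoncentration`).
-/


/-!
Statement 0: Optimality of separation, direct part (Part I, Theorem 1, first half).
If the compound channel 𝒜 can communicate the i.i.d. X source to within distortion D
(probability-of-excess-distortion criterion, uniformly over k ∈ 𝒜, random codes allowed),
then every rate 0 < R < R^P_X(D) is reliably achievable over 𝒜 with random codes.
-/

open Finset Filter
open scoped ENNReal

noncomputable section

/-- `p` is a probability mass function on the finite type `α`. -/
def IsDist {α : Type} [Fintype α] (p : α → ℝ) : Prop :=
  (∀ a, 0 ≤ p a) ∧ ∑ a, p a = 1

/-- A (general) channel with finite input alphabet `ℐ` and finite output alphabet `𝒪`: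
for each block length `n` and each input block, a probability distribution on output blocks. -/
structure Channel (ℐ 𝒪 : Type) [Fintype ℐ] [Fintype 𝒪] where
  k : ∀ n : ℕ, (Fin n → ℐ) → (Fin n → 𝒪) → ℝ
  isChan : ∀ n ι, IsDist (k n ι)

/-- A block random encoder–decoder pair: a joint probability distribution on pairs of
deterministic maps (encoder `A → B`, decoder `C → E`). -/
structure RandCode (A B C E : Type) [Fintype A] [DecidableEq A] [Fintype B]
    [Fintype C] [DecidableEq C] [Fintype E] where
  p : ((A → B) × (C → E)) → ℝ
  isDist : IsDist p

/-- Probability of the block `x` under the i.i.d. source with single-letter pmf `pX`. -/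
def iidP {𝒳 : Type} (pX : 𝒳 → ℝ) (n : ℕ) (x : Fin n → 𝒳) : ℝ := ∏ t, pX (x t)

/-- The additive `n`-letter extension `d^n` of a single-letter distortion function. -/
def dPow {𝒳 𝒴 : Type} (d : 𝒳 → 𝒴 → ℝ) (n : ℕ) (x : Fin n → 𝒳) (y : Fin n → 𝒴) : ℝ :=
  ∑ t, d (x t) (y t)

variable {𝒳 𝒴 ℐ 𝒪 : Type} [Fintype 𝒳] [DecidableEq 𝒳] [Fintype 𝒴]
  [Fintype ℐ] [Fintype 𝒪] [DecidableEq 𝒪]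

/-- End-to-end probability that the normalized distortion exceeds `D`, for the i.i.d. `pX`
source passed through random code `ρ` and channel `k`, at block length `n`. -/
def e2eExcess (pX : 𝒳 → ℝ) (d : 𝒳 → 𝒴 → ℝ) (D : ℝ) (n : ℕ)
    (ρ : RandCode (Fin n → 𝒳) (Fin n → ℐ) (Fin n → 𝒪) (Fin n → 𝒴))
    (k : Channel ℐ 𝒪) : ℝ :=
  ∑ ef, ρ.p ef * ∑ x, iidP pX n x * ∑ o, k.k n (ef.1 x) o *
    (if (n : ℝ) * D < dPow d n x (ef.2 o) then 1 else 0)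

/-- The compound channel `𝒜` is capable of communicating the i.i.d. `pX` source to within
distortion `D`: there are random codes and `ω n → 0`, independent of `k ∈ 𝒜`, with
`Pr(d^n(X^n,Y^n)/n > D) ≤ ω n` for every `n` and every `k ∈ 𝒜`. -/
def CanCommunicate (𝒜 : Set (Channel ℐ 𝒪)) (pX : 𝒳 → ℝ) (d : 𝒳 → 𝒴 → ℝ) (D : ℝ) : Prop :=
  ∃ ρ : ∀ n : ℕ, RandCode (Fin n → 𝒳) (Fin n → ℐ) (Fin n → 𝒪) (Fin n → 𝒴),
    ∃ ω : ℕ → ℝ, Tendsto ω atTop (nhds 0) ∧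
      ∀ n : ℕ, ∀ k ∈ 𝒜, e2eExcess pX d D n (ρ n) k ≤ ω n

/-- Size of the message set `M^n_R = {1, …, 2^⌊nR⌋}`. -/
def nMsg (R : ℝ) (n : ℕ) : ℕ := 2 ^ ⌊(n : ℝ) * R⌋₊

/-- Probability of a decoding error for message `m` with random channel code `σ` over
channel `k` at block length `n` (the decoder may output the error symbol `none`). -/
def chErr (R : ℝ) (n : ℕ)
    (σ : RandCode (Fin (nMsg R n)) (Fin n → ℐ) (Fin n → 𝒪) (Option (Fin (nMsg R n))))
    (k : Channel ℐ 𝒪) (m : Fin (nMsg R n)) : ℝ :=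
  ∑ ef, σ.p ef * ∑ o, k.k n (ef.1 m) o * (if ef.2 o = some m then 0 else 1)

/-- Rate `R` is reliably achievable over the compound channel `𝒜` with random codes:
there are random channel codes and `δ n → 0`, independent of `k ∈ 𝒜`, such that the maximal
probability of error is at most `δ n` for every `n`, every `k ∈ 𝒜`, and every message. -/
def ReliablyAchievable (𝒜 : Set (Channel ℐ 𝒪)) (R : ℝ) : Prop :=
  ∃ σ : ∀ n : ℕ, RandCode (Fin (nMsg R n)) (Fin n → ℐ) (Fin n → 𝒪) (Option (Fin (nMsg R n))),
    ∃ δ : ℕ → ℝ, Tendsto δ atTop (nhds 0) ∧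
      ∀ n : ℕ, ∀ k ∈ 𝒜, ∀ m, chErr R n (σ n) k m ≤ δ n

/-- Probability of excess distortion for a random rate-`R` source code `τ` at block length `n`. -/
def srcExcess (pX : 𝒳 → ℝ) (d : 𝒳 → 𝒴 → ℝ) (D R : ℝ) (n : ℕ)
    (τ : RandCode (Fin n → 𝒳) (Fin (nMsg R n)) (Fin (nMsg R n)) (Fin n → 𝒴)) : ℝ :=
  ∑ ef, τ.p ef * ∑ x, iidP pX n x *
    (if (n : ℝ) * D < dPow d n x (ef.2 (ef.1 x)) then 1 else 0)

/-- The operational rate-distortion function `R^P_X(D)`: infimum (in `ℝ≥0∞`, so `⊤` when no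
rate works) of rates `R > 0` for which some random source code codes the i.i.d. `pX` source
to within distortion `D` under the probability-of-excess-distortion criterion. -/
def RP (pX : 𝒳 → ℝ) (d : 𝒳 → 𝒴 → ℝ) (D : ℝ) : ℝ≥0∞ :=
  sInf {r : ℝ≥0∞ | ∃ R : ℝ, 0 < R ∧
    (∃ τ : ∀ n : ℕ, RandCode (Fin n → 𝒳) (Fin (nMsg R n)) (Fin (nMsg R n)) (Fin n → 𝒴),
      Tendsto (fun n => srcExcess pX d D R n (τ n)) atTop (nhds 0)) ∧
    r = ENNReal.ofReal R}

/-! ### Finite expectations and probabilities -/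

section Expectation

variable {α β : Type} [Fintype α] [Fintype β]

/-- Expectation of `f` under the mass function `p`. -/
def ev (p : α → ℝ) (f : α → ℝ) : ℝ := ∑ a, p a * f a

open Classical in
/-- Probability of the event `P` under the mass function `p`. -/
def pr (p : α → ℝ) (P : α → Prop) : ℝ := ev p (fun a => if P a then 1 else 0)

lemma ev_mono {p : α → ℝ} (hp : ∀ a, 0 ≤ p a) {f g : α → ℝ}
    (h : ∀ a, p a ≠ 0 → f a ≤ g a) : ev p f ≤ ev p g := by
  refine Finset.sum_le_sum fun a _ => ?_
  by_cases h0 : p a = 0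
  · simp [h0]
  · exact mul_le_mul_of_nonneg_left (h a h0) (hp a)

lemma ev_add (p f g : α → ℝ) : ev p (fun a => f a + g a) = ev p f + ev p g := by
  simp [ev, mul_add, Finset.sum_add_distrib]

lemma ev_sub (p f g : α → ℝ) : ev p (fun a => f a - g a) = ev p f - ev p g := by
  simp [ev, mul_sub, Finset.sum_sub_distrib]

lemma ev_mul_left (p f : α → ℝ) (c : ℝ) : ev p (fun a => c * f a) = c * ev p f := by
  simp [ev, Finset.mul_sum, mul_left_comm]

lemma ev_const {p : α → ℝ} (hp : IsDist p) (c : ℝ) : ev p (fun _ => c) = c := by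
  simp [ev, ← Finset.sum_mul, hp.2]

lemma ev_sum {ι : Type} (s : Finset ι) (p : α → ℝ) (f : ι → α → ℝ) :
    ev p (fun a => ∑ i ∈ s, f i a) = ∑ i ∈ s, ev p (f i) := by
  simp only [ev, Finset.mul_sum]
  exact Finset.sum_comm

lemma ev_comm (p : α → ℝ) (q : β → ℝ) (f : α → β → ℝ) :
    ev p (fun a => ev q (fun b => f a b)) = ev q (fun b => ev p (fun a => f a b)) := by
  simp only [ev, Finset.mul_sum]
  rw [Finset.sum_comm]
  exact Finset.sum_congr rfl fun _ _ => Finset.sum_congr rfl fun _ _ => by ring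

lemma pr_nonneg {p : α → ℝ} (hp : ∀ a, 0 ≤ p a) (P : α → Prop) : 0 ≤ pr p P :=
  Finset.sum_nonneg fun a _ => mul_nonneg (hp a) (by dsimp only; split_ifs <;> norm_num)

lemma pr_mono {p : α → ℝ} (hp : ∀ a, 0 ≤ p a) {P Q : α → Prop}
    (h : ∀ a, p a ≠ 0 → P a → Q a) : pr p P ≤ pr p Q := by
  refine ev_mono hp fun a ha => ?_
  have := h a ha
  split_ifs <;> first | tauto | norm_num

lemma pr_le_one {p : α → ℝ} (hp : IsDist p) (P : α → Prop) : pr p P ≤ 1 := by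
  rw [← ev_const hp 1]
  exact ev_mono hp.1 fun a _ => by split_ifs <;> norm_num

lemma pr_or_le {p : α → ℝ} (hp : ∀ a, 0 ≤ p a) (P Q : α → Prop) :
    pr p (fun a => P a ∨ Q a) ≤ pr p P + pr p Q := by
  unfold pr
  rw [← ev_add]
  refine ev_mono hp fun a _ => ?_
  by_cases h1 : P a <;> by_cases h2 : Q a <;> simp [h1, h2]

/-- Markov's inequality. -/
lemma pr_mul_le {p : α → ℝ} (hp : ∀ a, 0 ≤ p a) {f : α → ℝ} (hf : ∀ a, 0 ≤ f a)
    {P : α → Prop} {t : ℝ} (h : ∀ a, P a → t ≤ f a) : t * pr p P ≤ ev p f := by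
  unfold pr
  rw [← ev_mul_left]
  refine ev_mono hp fun a _ => ?_
  by_cases hP : P a
  · simpa [hP] using h a hP
  · simpa [hP] using hf a

end Expectation

/-! ### Expectations over i.i.d. blocks -/

section IID

variable {α : Type} [Fintype α]

lemma iidP_isDist {p : α → ℝ} (hp : IsDist p) (n : ℕ) : IsDist (iidP p n) := by
  refine ⟨fun x => Finset.prod_nonneg fun t _ => hp.1 _, ?_⟩
  have := Fintype.prod_sum (fun (_ : Fin n) (a : α) => p a)
  simp only [hp.2, Finset.prod_const_one] at this
  exact this.symm

lemma ev_iidP_succ (p : α → ℝ) (n : ℕ) (f : (Fin (n + 1) → α) → ℝ) :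
    ev (iidP p (n + 1)) f = ev p (fun a => ev (iidP p n) (fun x => f (Fin.cons a x))) := by
  unfold ev
  rw [← (Fin.consEquiv (fun _ => α)).sum_comp, Fintype.sum_prod_type]
  refine Finset.sum_congr rfl fun a _ => ?_
  rw [Finset.mul_sum]
  refine Finset.sum_congr rfl fun x _ => ?_
  simp [iidP, Fin.consEquiv, Fin.prod_univ_succ, mul_assoc]

lemma iidP_append {α : Type} (p : α → ℝ) {a b : ℕ} (u : Fin a → α) (v : Fin b → α) :
    iidP p (a + b) (Fin.append u v) = iidP p a u * iidP p b v := by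
  simp [iidP, Fin.prod_univ_add]

lemma ev_iidP_add (p : α → ℝ) (a b : ℕ) (f : (Fin (a + b) → α) → ℝ) :
    ev (iidP p (a + b)) f =
      ev (iidP p a) (fun u => ev (iidP p b) (fun v => f (Fin.append u v))) := by
  unfold ev
  rw [← (Fin.appendEquiv a b).sum_comp, Fintype.sum_prod_type]
  refine Finset.sum_congr rfl fun u _ => ?_
  rw [Finset.mul_sum]
  refine Finset.sum_congr rfl fun v _ => ?_
  simp [Fin.appendEquiv, iidP_append, mul_assoc]

lemma ev_iidP_add_left {p : α → ℝ} (hp : IsDist p) (a b : ℕ) (f : (Fin a → α) → ℝ) :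
    ev (iidP p (a + b)) (fun x => f (fun i => x (Fin.castAdd b i))) = ev (iidP p a) f := by
  rw [ev_iidP_add]
  simp only [Fin.append_left, ev_const (iidP_isDist hp b)]

lemma ev_iidP_add_right {p : α → ℝ} (hp : IsDist p) (a b : ℕ) (f : (Fin b → α) → ℝ) :
    ev (iidP p (a + b)) (fun x => f (fun i => x (Fin.natAdd a i))) = ev (iidP p b) f := by
  rw [ev_iidP_add]
  simp only [Fin.append_right, ev_const (iidP_isDist hp a)]

lemma pr_iidP_add_left {p : α → ℝ} (hp : IsDist p) (a b : ℕ) (P : (Fin a → α) → Prop) :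
    pr (iidP p (a + b)) (fun x => P (fun i => x (Fin.castAdd b i))) = pr (iidP p a) P := by
  unfold pr
  exact ev_iidP_add_left hp a b (fun u => @ite ℝ (P u) (Classical.propDecidable _) 1 0)

lemma pr_iidP_add_right {p : α → ℝ} (hp : IsDist p) (a b : ℕ) (P : (Fin b → α) → Prop) :
    pr (iidP p (a + b)) (fun x => P (fun i => x (Fin.natAdd a i))) = pr (iidP p b) P := by
  unfold pr
  exact ev_iidP_add_right hp a b (fun u => @ite ℝ (P u) (Classical.propDecidable _) 1 0)

/-- Functions of two distinct coordinates of an i.i.d. block are uncorrelated. -/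
lemma ev_iidP_two {p : α → ℝ} (hp : IsDist p) {n : ℕ} {i j : Fin n} (hij : i ≠ j)
    (φ ψ : α → ℝ) : ev (iidP p n) (fun c => φ (c i) * ψ (c j)) = ev p φ * ev p ψ := by
  have key := Fintype.prod_sum (fun (t : Fin n) (a : α) =>
    p a * ((if t = i then φ a else 1) * (if t = j then ψ a else 1)))
  have h1 : ∀ c : Fin n → α, ∏ t, p (c t) * ((if t = i then φ (c t) else 1) *
      (if t = j then ψ (c t) else 1)) = iidP p n c * (φ (c i) * ψ (c j)) := by
    intro c
    rw [Finset.prod_mul_distrib, Finset.prod_mul_distrib]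
    simp [iidP, Finset.prod_ite_eq']
  simp only [h1] at key
  rw [ev, ← key]
  have h2 : ∀ t : Fin n, ∑ a, p a * ((if t = i then φ a else 1) * (if t = j then ψ a else 1))
      = (if t = i then ev p φ else 1) * (if t = j then ev p ψ else 1) := by
    intro t
    by_cases hi : t = i
    · have : t ≠ j := by rw [hi]; exact hij
      simp [hi, hij, ev]
    · by_cases hj : t = j
      · simp [hj, hij.symm, ev]
      · simp [hi, hj, hp.2]
  simp only [h2, Finset.prod_mul_distrib]
  simp

lemma ev_iidP_one {p : α → ℝ} (hp : IsDist p) {n : ℕ} (i : Fin n)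
    (φ : α → ℝ) : ev (iidP p n) (fun c => φ (c i)) = ev p φ := by
  have key := Fintype.prod_sum (fun (t : Fin n) (a : α) =>
    p a * (if t = i then φ a else 1))
  have h1 : ∀ c : Fin n → α, ∏ t, p (c t) * (if t = i then φ (c t) else 1)
      = iidP p n c * φ (c i) := by
    intro c
    rw [Finset.prod_mul_distrib]
    simp [iidP, Finset.prod_ite_eq']
  simp only [h1] at key
  rw [ev, ← key]
  have h2 : ∀ t : Fin n, ∑ a, p a * (if t = i then φ a else 1)
      = (if t = i then ev p φ else 1) := by
    intro t
    by_cases hi : t = i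
    · simp [hi, ev]
    · simp [hi, hp.2]
  simp only [h2]
  simp

/-! ### Moments of sums of centered i.i.d. variables -/

lemma ev_sum_one {p : α → ℝ} (hp : IsDist p) {h : α → ℝ} (h0 : ev p h = 0) (n : ℕ) :
    ev (iidP p n) (fun x => ∑ t, h (x t)) = 0 := by
  rw [ev_sum]
  exact Finset.sum_eq_zero fun i _ => by rw [ev_iidP_one hp, h0]

lemma ev_sum_sq {p : α → ℝ} (hp : IsDist p) {h : α → ℝ} (h0 : ev p h = 0) (n : ℕ) :
    ev (iidP p n) (fun x => (∑ t, h (x t)) ^ 2) = n * ev p (fun a => h a ^ 2) := by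
  induction n with
  | zero => simp [ev]
  | succ n ih =>
    rw [ev_iidP_succ]
    have step : ∀ a, ev (iidP p n) (fun x => (∑ t, h ((Fin.cons a x : Fin (n + 1) → α) t)) ^ 2)
        = h a ^ 2 + n * ev p (fun a => h a ^ 2) := by
      intro a
      have e : (fun x : Fin n → α => (∑ t, h ((Fin.cons a x : Fin (n + 1) → α) t)) ^ 2) =
          fun x => h a ^ 2 + (2 * h a * (∑ t, h (x t)) + (∑ t, h (x t)) ^ 2) := by
        funext x
        rw [Fin.sum_univ_succ]
        simp only [Fin.cons_zero, Fin.cons_succ]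
        ring
      rw [e, ev_add, ev_add, ev_mul_left, ev_sum_one hp h0, ih, ev_const (iidP_isDist hp n)]
      ring
    simp only [step]
    rw [ev_add, ev_const hp]
    push_cast
    ring

lemma ev_sum_four {p : α → ℝ} (hp : IsDist p) {h : α → ℝ} (h0 : ev p h = 0) (n : ℕ) :
    ev (iidP p n) (fun x => (∑ t, h (x t)) ^ 4) ≤
      (3 * ev p (fun a => h a ^ 2) ^ 2 + ev p (fun a => h a ^ 4)) * n ^ 2 := by
  induction n with
  | zero => simp [ev]
  | succ n ih =>
    rw [ev_iidP_succ]
    set v := ev p (fun a => h a ^ 2) with hv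
    have step : ∀ a, ev (iidP p n) (fun x => (∑ t, h ((Fin.cons a x : Fin (n + 1) → α) t)) ^ 4)
        = h a ^ 4 + ((6 * n * v) * h a ^ 2 +
            ((4 * ev (iidP p n) (fun x => (∑ t, h (x t)) ^ 3)) * h a +
              ev (iidP p n) (fun x => (∑ t, h (x t)) ^ 4))) := by
      intro a
      have e : (fun x : Fin n → α => (∑ t, h ((Fin.cons a x : Fin (n + 1) → α) t)) ^ 4) =
          fun x => h a ^ 4 + (4 * h a ^ 3 * (∑ t, h (x t)) + (6 * h a ^ 2 * (∑ t, h (x t)) ^ 2 +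
            (4 * h a * (∑ t, h (x t)) ^ 3 + (∑ t, h (x t)) ^ 4))) := by
        funext x
        rw [Fin.sum_univ_succ]
        simp only [Fin.cons_zero, Fin.cons_succ]
        ring
      rw [e, ev_add, ev_add, ev_add, ev_add, ev_mul_left, ev_mul_left, ev_mul_left,
        ev_sum_one hp h0, ev_sum_sq hp h0, ev_const (iidP_isDist hp n)]
      ring
    simp only [step]
    rw [ev_add, ev_add, ev_add, ev_mul_left, ev_mul_left, h0, ev_const hp, ← hv]
    have hm : 0 ≤ ev p (fun a => h a ^ 4) :=
      Finset.sum_nonneg fun a _ => mul_nonneg (hp.1 a) (by positivity)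
    push_cast
    nlinarith [mul_nonneg (Nat.cast_nonneg (α := ℝ) n) hm, sq_nonneg v]

/-- Chebyshev's inequality for a sum of centered i.i.d. variables. -/
lemma chebyshev {p : α → ℝ} (hp : IsDist p) {h : α → ℝ} (h0 : ev p h = 0) (n : ℕ)
    {t : ℝ} (ht : 0 ≤ t) :
    t ^ 2 * pr (iidP p n) (fun x => t < ∑ i, h (x i)) ≤ n * ev p (fun a => h a ^ 2) := by
  rw [← ev_sum_sq hp h0]
  exact pr_mul_le (iidP_isDist hp n).1 (fun _ => sq_nonneg _)
    fun x hx => pow_le_pow_left₀ ht hx.le 2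

/-- Sums of nondegenerate centered i.i.d. variables are positive with probability bounded away
from zero. The bound comes from `w + w² - w⁴ ≤ 2·𝟙[w > 0]`, applied to a multiple `w` of the sum
whose second moment exceeds its fourth. -/
lemma anticoncentration {p : α → ℝ} (hp : IsDist p) {h : α → ℝ} (h0 : ev p h = 0)
    (hv : 0 < ev p (fun a => h a ^ 2)) :
    ∃ κ > 0, ∀ n : ℕ, 0 < n → κ ≤ pr (iidP p n) (fun x => 0 < ∑ t, h (x t)) := by
  set v := ev p (fun a => h a ^ 2) with hvdef
  set C := 3 * v ^ 2 + ev p (fun a => h a ^ 4) with hC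
  have hm : 0 ≤ ev p (fun a => h a ^ 4) :=
    Finset.sum_nonneg fun a _ => mul_nonneg (hp.1 a) (by positivity)
  have hCpos : 0 < C := by positivity
  refine ⟨v ^ 2 / (8 * C), by positivity, fun n hn => ?_⟩
  have hn' : (0 : ℝ) < n := by exact_mod_cast hn
  set a := Real.sqrt (v / (2 * C * n)) with ha
  have ha2 : a ^ 2 = v / (2 * C * n) := Real.sq_sqrt (by positivity)
  have hpt : ∀ w : ℝ, w + w ^ 2 - w ^ 4 ≤ 2 * (if 0 < w then 1 else 0) := by
    intro w
    split_ifs with hw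
    · nlinarith [sq_nonneg (w ^ 2 - 1), sq_nonneg (w - 1)]
    · push Not at hw
      have : 0 ≤ 1 - (-w) + (-w) ^ 3 := by
        nlinarith [mul_nonneg (neg_nonneg.2 hw) (sq_nonneg (-w - 1)), sq_nonneg (-w - 1)]
      nlinarith [mul_nonneg (neg_nonneg.2 hw) this]
  have hle : ev (iidP p n) (fun x => a * (∑ t, h (x t)) + (a ^ 2 * (∑ t, h (x t)) ^ 2
      - a ^ 4 * (∑ t, h (x t)) ^ 4)) ≤ 2 * pr (iidP p n) (fun x => 0 < ∑ t, h (x t)) := by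
    unfold pr
    rw [← ev_mul_left]
    refine ev_mono (iidP_isDist hp n).1 fun x _ => ?_
    have hapos : 0 < a := Real.sqrt_pos.2 (by positivity)
    have h1 := hpt (a * ∑ t, h (x t))
    simp only [mul_pos_iff_of_pos_left hapos] at h1
    calc _ = _ := by ring
      _ ≤ _ := h1
      _ = _ := by split_ifs <;> rfl
  rw [ev_add, ev_sub, ev_mul_left, ev_mul_left, ev_mul_left, ev_sum_one hp h0,
    ev_sum_sq hp h0] at hle
  have h4 := mul_le_mul_of_nonneg_left (ev_sum_four hp h0 n) (by positivity : 0 ≤ a ^ 4)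
  have e2 : a ^ 2 * (n * v) = v ^ 2 / (2 * C) := by rw [ha2]; field_simp
  have e4 : a ^ 4 * (C * n ^ 2) = v ^ 2 / (4 * C) := by
    rw [show a ^ 4 = (a ^ 2) ^ 2 by ring, ha2]; field_simp; norm_num
  have e5 : v ^ 2 / (2 * C) = 4 * (v ^ 2 / (8 * C)) := by field_simp; norm_num
  have e6 : v ^ 2 / (4 * C) = 2 * (v ^ 2 / (8 * C)) := by field_simp; norm_num
  rw [← hvdef, ← hC] at h4
  linarith

end IID

/-! ### Greedy covering -/

/-- Greedy covering: at most `1 / θ` of the events `B y` can be selected so that no `B y` captures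
more than `θ` of the mass left uncovered by the selection. -/
lemma greedy_cover {α β : Type} [Fintype α] [Fintype β] {μ : α → ℝ} (hμ : IsDist μ)
    (B : β → α → Prop) {θ : ℝ} (hθ : 0 ≤ θ) :
    ∃ C : Finset β, C.card * θ ≤ 1 ∧
      ∀ y, pr μ (fun x => B y x ∧ ∀ y' ∈ C, ¬ B y' x) ≤ θ := by
  classical
  obtain ⟨C, hC, hmax⟩ := Finset.exists_max_image
    (Finset.univ.filter fun C : Finset β => C.card * θ ≤ pr μ (fun x => ∃ y ∈ C, B y x))
    Finset.card ⟨∅, by simp [pr, ev]⟩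
  simp only [Finset.mem_filter, Finset.mem_univ, true_and] at hC hmax
  refine ⟨C, hC.trans (pr_le_one hμ _), fun y => ?_⟩
  by_contra! hlt
  by_cases hy : y ∈ C
  · have h0 : pr μ (fun x => B y x ∧ ∀ y' ∈ C, ¬ B y' x) = 0 := by
      have : ∀ x, ¬ (B y x ∧ ∀ y' ∈ C, ¬ B y' x) := fun x h => h.2 y hy h.1
      simp [pr, ev, this]
    linarith
  · have := hmax (insert y C) (by
      rw [Finset.card_insert_of_notMem hy]
      have hsplit : pr μ (fun x => ∃ y' ∈ insert y C, B y' x) =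
          pr μ (fun x => B y x ∧ ∀ y' ∈ C, ¬ B y' x) + pr μ (fun x => ∃ y ∈ C, B y x) := by
        unfold pr
        rw [← ev_add]
        congr 1
        funext x
        by_cases h1 : B y x <;> by_cases h2 : ∃ y' ∈ C, B y' x <;>
          simp_all
      rw [hsplit]
      push_cast
      linarith)
    rw [Finset.card_insert_of_notMem hy] at this
    omega

/-! ### Random coding into the source -/

section Pushforward

variable {α β : Type} [Fintype α] [Fintype β]

open Classical in
/-- Pushforward of the mass function `p` along `F`. -/
def push (p : α → ℝ) (F : α → β) (b : β) : ℝ := ∑ a, if F a = b then p a else 0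

lemma ev_push (p : α → ℝ) (F : α → β) (h : β → ℝ) :
    ev (push p F) h = ev p (fun a => h (F a)) := by
  classical
  simp only [ev, push, Finset.sum_mul]
  rw [Finset.sum_comm]
  refine Finset.sum_congr rfl fun a _ => ?_
  rw [Finset.sum_eq_single (F a)] <;> simp +contextual [eq_comm]

lemma push_isDist {p : α → ℝ} (hp : IsDist p) (F : α → β) : IsDist (push p F) := by
  refine ⟨fun b => Finset.sum_nonneg fun a _ => ?_, ?_⟩
  · split_ifs
    · exact hp.1 a
    · exact le_rfl
  · have := ev_push p F (fun _ => 1)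
    rw [ev_const hp] at this
    simpa [ev] using this

end Pushforward

section ChannelCode

variable {A I O Y : Type} [Fintype A] [DecidableEq A] [Fintype I] [Fintype O] [DecidableEq O]
  [Fintype Y]

open Classical in
/-- The decoder of the random channel code: declare the unique message whose codeword in the
codebook `c` is not `bad` for the reproduction `y`, if there is exactly one. -/
def decodeUnique (bad : A → Y → Prop) {M : ℕ} (c : Fin M → A) (y : Y) : Option (Fin M) :=
  if h : ∃ m, ¬ bad (c m) y ∧ ∀ m', m' ≠ m → bad (c m') y then some h.choose else none

lemma decodeUnique_eq {A Y : Type} (bad : A → Y → Prop) {M : ℕ} (c : Fin M → A) (y : Y) (m : Fin M)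
    (h1 : ¬ bad (c m) y) (h2 : ∀ m', m' ≠ m → bad (c m') y) :
    decodeUnique bad c y = some m := by
  have h : ∃ m, ¬ bad (c m) y ∧ ∀ m', m' ≠ m → bad (c m') y := ⟨m, h1, h2⟩
  rw [decodeUnique, dif_pos h]
  by_contra hne
  exact h1 (h.choose_spec.2 m fun he => hne (by rw [← he]))

open Classical in
/-- Random coding with codewords drawn i.i.d. from a distribution `Q` on source blocks, each sent
through the source encoder. The error probability is at most the end-to-end excess probability
under `Q` plus a union bound over the competing codewords. -/
lemma exists_channel_code (ρ : RandCode A I O Y) {Q : A → ℝ} (hQ : IsDist Q)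
    (bad : A → Y → Prop) {θ : ℝ} (hθ0 : 0 ≤ θ)
    (hθ : ∀ y, pr Q (fun x => ¬ bad x y) ≤ θ) (M : ℕ) :
    ∃ σ : RandCode (Fin M) I O (Option (Fin M)),
      ∀ k : I → O → ℝ, (∀ ι, IsDist (k ι)) → ∀ m,
        ev σ.p (fun ef => ev (k (ef.1 m)) (fun o => if ef.2 o = some m then 0 else 1)) ≤
          ev ρ.p (fun ef => ev Q (fun x => pr (k (ef.1 x)) (fun o => bad x (ef.2 o))))
            + M * θ := by
  set J : (((A → I) × (O → Y)) × (Fin M → A)) → ℝ := fun a => ρ.p a.1 * iidP Q M a.2 with hJ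
  set F : (((A → I) × (O → Y)) × (Fin M → A)) → ((Fin M → I) × (O → Option (Fin M))) :=
    fun a => (fun m => a.1.1 (a.2 m), fun o => decodeUnique bad a.2 (a.1.2 o)) with hF
  have hevJ : ∀ h, ev J h = ev ρ.p (fun ef => ev (iidP Q M) (fun c => h (ef, c))) := by
    intro h
    simp only [ev, hJ, Fintype.sum_prod_type (α₂ := Fin M → A), Finset.mul_sum, mul_assoc]
  have hJd : IsDist J := by
    refine ⟨fun a => mul_nonneg (ρ.isDist.1 _) ((iidP_isDist hQ M).1 _), ?_⟩
    have := hevJ (fun _ => 1)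
    simp only [ev_const (iidP_isDist hQ M), ev_const ρ.isDist] at this
    simpa [ev] using this
  refine ⟨⟨push J F, push_isDist hJd F⟩, fun k hk m => ?_⟩
  rw [ev_push, hevJ]
  have hone : ev ρ.p (fun _ => (M : ℝ) * θ) = M * θ := ev_const ρ.isDist _
  rw [← hone, ← ev_add]
  refine ev_mono ρ.isDist.1 fun ef _ => ?_
  obtain ⟨e, f⟩ := ef
  simp only [hF]
  -- the union bound, pointwise in the codebook and the channel output
  have hpt : ∀ c : Fin M → A, ∀ o,
      (if decodeUnique bad c (f o) = some m then (0 : ℝ) else 1) ≤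
        (if bad (c m) (f o) then 1 else 0) +
          ∑ m' ∈ Finset.univ.erase m, (if ¬ bad (c m') (f o) then 1 else 0) := by
    intro c o
    have hnn : ∀ m' ∈ Finset.univ.erase m, (0 : ℝ) ≤ (if ¬ bad (c m') (f o) then 1 else 0) :=
      fun m' _ => by split_ifs <;> norm_num
    by_cases h1 : bad (c m) (f o)
    · have := Finset.sum_nonneg hnn
      rw [if_pos h1]
      split_ifs <;> linarith
    · by_cases h2 : ∀ m', m' ≠ m → bad (c m') (f o)
      · rw [if_pos (decodeUnique_eq bad c (f o) m h1 h2), if_neg h1]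
        have := Finset.sum_nonneg hnn
        linarith
      · push Not at h2
        obtain ⟨m', hm', hb⟩ := h2
        have := Finset.single_le_sum hnn (Finset.mem_erase.2 ⟨hm', Finset.mem_univ _⟩)
        rw [if_pos hb] at this
        rw [if_neg h1]
        split_ifs <;> linarith
  calc ev (iidP Q M) (fun c => ev (k (e (c m)))
        (fun o => if decodeUnique bad c (f o) = some m then 0 else 1))
      ≤ ev (iidP Q M) (fun c => ev (k (e (c m))) (fun o => (if bad (c m) (f o) then 1 else 0) +
          ∑ m' ∈ Finset.univ.erase m, (if ¬ bad (c m') (f o) then 1 else 0))) :=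
        ev_mono (iidP_isDist hQ M).1 fun c _ => ev_mono (hk _).1 fun o _ => hpt c o
    _ = ev Q (fun x => pr (k (e x)) (fun o => bad x (f o))) +
          ∑ m' ∈ Finset.univ.erase m, ev (iidP Q M) (fun c => ev (k (e (c m)))
            (fun o => if ¬ bad (c m') (f o) then 1 else 0)) := by
        simp only [ev_add, ev_sum]
        congr 1
        exact ev_iidP_one hQ m (fun x => pr (k (e x)) (fun o => bad x (f o)))
    _ ≤ ev Q (fun x => pr (k (e x)) (fun o => bad x (f o))) +
          ∑ m' ∈ Finset.univ.erase m, θ := by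
        gcongr with m' hm'
        have hne : m ≠ m' := (Finset.mem_erase.1 hm').1.symm
        have hsw : ev (iidP Q M) (fun c => ev (k (e (c m)))
            (fun o => if ¬ bad (c m') (f o) then 1 else 0)) =
            ∑ o, ev Q (fun x => k (e x) o) * pr Q (fun x => ¬ bad x (f o)) := by
          have hexp : ∀ c : Fin M → A, ev (k (e (c m)))
            (fun o => if ¬ bad (c m') (f o) then 1 else 0) =
            ∑ o, k (e (c m)) o * (if ¬ bad (c m') (f o) then 1 else 0) := fun _ => rfl
          simp only [hexp]
          rw [ev_sum]
          refine Finset.sum_congr rfl fun o _ => (ev_iidP_two hQ hne (fun x => k (e x) o)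
            (fun x => if ¬ bad x (f o) then 1 else 0)).trans ?_
          unfold pr
          congr!
        rw [hsw]
        calc _ ≤ ∑ o, ev Q (fun x => k (e x) o) * θ := by
              refine Finset.sum_le_sum fun o _ => mul_le_mul_of_nonneg_left (hθ _) ?_
              exact Finset.sum_nonneg fun x _ => mul_nonneg (hQ.1 x) ((hk _).1 o)
          _ = θ := by
              rw [← Finset.sum_mul, ← ev_sum]
              simp only [(hk _).2, ev_const hQ, one_mul]
    _ ≤ _ := by
        rw [Finset.sum_const, Finset.card_erase_of_mem (Finset.mem_univ _), nsmul_eq_mul,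
          Finset.card_univ, Fintype.card_fin]
        gcongr
        exact_mod_cast Nat.sub_le M 1

end ChannelCode

/-! ### Boosting a covering at one block length to all large block lengths -/

section Boost

variable {X Y : Type} [Fintype X] [Fintype Y]

/-- Probability that an i.i.d. source block has no codeword of `C` within distortion `n * D`. -/
def uncov {X Y : Type} [Fintype X] (p : X → ℝ) (d : X → Y → ℝ) (D : ℝ) (n : ℕ)
    (C : Finset (Fin n → Y)) : ℝ :=
  pr (iidP p n) (fun x => ∀ y ∈ C, (n : ℝ) * D < dPow d n x y)

lemma dPow_append {X Y : Type} (d : X → Y → ℝ) {a b : ℕ} (u : Fin a → X) (v : Fin b → X)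
    (y : Fin a → Y) (z : Fin b → Y) :
    dPow d (a + b) (Fin.append u v) (Fin.append y z) = dPow d a u y + dPow d b v z := by
  simp [dPow, Fin.sum_univ_add]

open Classical in
/-- All concatenations of a word of `C₁` with a word of `C₂`. -/
def concat {Y : Type} {a b : ℕ} (C₁ : Finset (Fin a → Y)) (C₂ : Finset (Fin b → Y)) :
    Finset (Fin (a + b) → Y) :=
  (C₁ ×ˢ C₂).image fun q => Fin.append q.1 q.2

lemma card_concat_le {Y : Type} {a b : ℕ} (C₁ : Finset (Fin a → Y)) (C₂ : Finset (Fin b → Y)) :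
    (concat C₁ C₂).card ≤ C₁.card * C₂.card := by
  classical
  exact Finset.card_image_le.trans (Finset.card_product _ _).le

lemma append_mem_concat {Y : Type} {a b : ℕ} {C₁ : Finset (Fin a → Y)} {C₂ : Finset (Fin b → Y)}
    {y : Fin a → Y} {z : Fin b → Y} (hy : y ∈ C₁) (hz : z ∈ C₂) :
    Fin.append y z ∈ concat C₁ C₂ := by
  classical
  exact Finset.mem_image.2 ⟨(y, z), Finset.mem_product.2 ⟨hy, hz⟩, rfl⟩

/-- A block of length `n₀ * m` is cut into `m` blocks, and `F` counts those not covered by `C`.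
Uncovered blocks are reproduced letter by letter through `yb`, at a loss of at most `G` per letter
over `D`; as long as at most `s` of them occur, this costs at most a factor
`2 ^ m * (|Y| ^ n₀) ^ s` in the number of codewords. -/
lemma boost_blocks {p : X → ℝ} (hp : IsDist p) (d : X → Y → ℝ) (D : ℝ) (yb : X → Y)
    {G : ℝ} (hG : ∀ x, p x ≠ 0 → d x (yb x) - D ≤ G)
    (n₀ : ℕ) (C : Finset (Fin n₀ → Y)) (hC : C.Nonempty) (m : ℕ) :
    ∃ F : (Fin (n₀ * m) → X) → ℕ,
      ev (iidP p (n₀ * m)) (fun x => (F x : ℝ)) = m * uncov p d D n₀ C ∧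
      ∀ s : ℕ, ∃ C' : Finset (Fin (n₀ * m) → Y),
        C'.card ≤ 2 ^ m * C.card ^ m * (Fintype.card Y ^ n₀) ^ s ∧
        ∀ x, iidP p (n₀ * m) x ≠ 0 → F x ≤ s →
          ∃ y ∈ C', dPow d (n₀ * m) x y ≤ (n₀ * m : ℕ) * D + G * n₀ * F x := by
  classical
  induction m with
  | zero =>
    refine ⟨fun _ => 0, by simp [ev], fun s =>
      ⟨{Fin.elim0}, ?_, fun x _ _ => ⟨_, Finset.mem_singleton_self _, ?_⟩⟩⟩
    · have : 0 < Fintype.card Y ^ n₀ := by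
        obtain ⟨y, _⟩ := hC
        have : 0 < Fintype.card (Fin n₀ → Y) := Fintype.card_pos_iff.2 ⟨y⟩
        simpa using this
      simpa using Nat.one_le_pow s _ this
    · simp [dPow]
  | succ m ih =>
    obtain ⟨F, hF, hcode⟩ := ih
    -- peel off the last block; `n₀ * (m + 1)` is definitionally `n₀ * m + n₀`
    have hbr := ev_iidP_add_right hp (n₀ * m) n₀
      (fun v => if ∀ y ∈ C, (n₀ : ℝ) * D < dPow d n₀ v y then (1 : ℝ) else 0)
    have hbl := ev_iidP_add_left hp (n₀ * m) n₀ (fun u => (F u : ℝ))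
    change ∃ F : (Fin (n₀ * m + n₀) → X) → ℕ,
      ev (iidP p (n₀ * m + n₀)) (fun x => (F x : ℝ)) = (m + 1 : ℕ) * uncov p d D n₀ C ∧
      ∀ s : ℕ, ∃ C' : Finset (Fin (n₀ * m + n₀) → Y),
        C'.card ≤ 2 ^ (m + 1) * C.card ^ (m + 1) * (Fintype.card Y ^ n₀) ^ s ∧
        ∀ x, iidP p (n₀ * m + n₀) x ≠ 0 → F x ≤ s →
          ∃ y ∈ C', dPow d (n₀ * m + n₀) x y ≤ (n₀ * m + n₀ : ℕ) * D + G * n₀ * F x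
    set F' : (Fin (n₀ * m + n₀) → X) → ℕ := fun x => F (fun i => x (Fin.castAdd n₀ i)) +
      (if ∀ y ∈ C, (n₀ : ℝ) * D < dPow d n₀ (fun i => x (Fin.natAdd (n₀ * m) i)) y
        then 1 else 0) with hF'
    refine ⟨F', ?_, fun s => ?_⟩
    · simp only [hF']
      push_cast
      rw [ev_add, hbl, hbr, hF]
      have : uncov p d D n₀ C = ev (iidP p n₀)
          (fun v => if ∀ y ∈ C, (n₀ : ℝ) * D < dPow d n₀ v y then (1 : ℝ) else 0) := by
        unfold uncov pr
        congr!
      rw [this]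
      ring
    · obtain ⟨C₁, hC₁, h₁⟩ := hcode s
      have hC1 : 1 ≤ C.card := hC.card_pos
      -- the second family is needed only when a failing block is allowed
      obtain ⟨C₂, hC₂, h₂⟩ : ∃ C₂ : Finset (Fin (n₀ * m) → Y),
          C₂.card * Fintype.card Y ^ n₀ ≤ 2 ^ m * C.card ^ m * (Fintype.card Y ^ n₀) ^ s ∧
          ∀ x, iidP p (n₀ * m) x ≠ 0 → F x + 1 ≤ s →
            ∃ y ∈ C₂, dPow d (n₀ * m) x y ≤ (n₀ * m : ℕ) * D + G * n₀ * F x := by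
        cases s with
        | zero => exact ⟨∅, by simp, fun x _ h => by omega⟩
        | succ s =>
          obtain ⟨C₂, hC₂, h₂⟩ := hcode s
          refine ⟨C₂, ?_, fun x hx h => h₂ x hx (by omega)⟩
          calc _ ≤ 2 ^ m * C.card ^ m * (Fintype.card Y ^ n₀) ^ s * Fintype.card Y ^ n₀ :=
                Nat.mul_le_mul_right _ hC₂
            _ = _ := by ring
      refine ⟨concat C₁ C ∪ concat C₂ Finset.univ, ?_, ?_⟩
      · calc _ ≤ (concat C₁ C).card + (concat C₂ Finset.univ).card := Finset.card_union_le _ _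
          _ ≤ C₁.card * C.card + C₂.card * Fintype.card Y ^ n₀ := by
              gcongr
              · exact card_concat_le _ _
              · simpa using card_concat_le C₂ (Finset.univ : Finset (Fin n₀ → Y))
          _ ≤ 2 ^ m * C.card ^ m * (Fintype.card Y ^ n₀) ^ s * C.card +
                2 ^ m * C.card ^ m * (Fintype.card Y ^ n₀) ^ s * C.card := by
              exact add_le_add (Nat.mul_le_mul_right _ hC₁)
                (hC₂.trans (Nat.le_mul_of_pos_right _ hC1))
          _ = _ := by ring
      · intro x hx hFx
        set u : Fin (n₀ * m) → X := fun i => x (Fin.castAdd n₀ i) with hu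
        set v : Fin n₀ → X := fun i => x (Fin.natAdd (n₀ * m) i) with hv
        have hxuv : x = Fin.append u v := (Fin.append_castAdd_natAdd).symm
        rw [hxuv, iidP_append] at hx
        have hu0 := left_ne_zero_of_mul hx
        have hv0 := right_ne_zero_of_mul hx
        have hFd : ∀ x : Fin (n₀ * m + n₀) → X, F' x = F (fun i => x (Fin.castAdd n₀ i)) +
            (if ∀ y ∈ C, (n₀ : ℝ) * D < dPow d n₀ (fun i => x (Fin.natAdd (n₀ * m) i)) y
              then 1 else 0) := fun _ => rfl
        rw [hFd, ← hu, ← hv] at hFx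
        rw [hFd, ← hu, ← hv]
        by_cases hbad : ∀ y ∈ C, (n₀ : ℝ) * D < dPow d n₀ v y
        · rw [if_pos hbad] at hFx ⊢
          obtain ⟨y, hy, hyd⟩ := h₂ u hu0 hFx
          refine ⟨Fin.append y (fun i => yb (v i)), Finset.mem_union_right _
            (append_mem_concat hy (Finset.mem_univ _)), ?_⟩
          rw [hxuv, dPow_append]
          have : dPow d n₀ v (fun i => yb (v i)) ≤ n₀ * (D + G) := by
            calc _ ≤ ∑ _i : Fin n₀, (D + G) := by
                  refine Finset.sum_le_sum fun i _ => ?_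
                  have := hG (v i) fun h0 => hv0 (Finset.prod_eq_zero (Finset.mem_univ i) h0)
                  linarith
              _ = _ := by simp [mul_add]
          push_cast at hyd ⊢
          linarith
        · rw [if_neg hbad] at hFx ⊢
          obtain ⟨y, hy, hyd⟩ := h₁ u hu0 (by simpa using hFx)
          push Not at hbad
          obtain ⟨z, hz, hzd⟩ := hbad
          refine ⟨Fin.append y z, Finset.mem_union_left _ (append_mem_concat hy hz), ?_⟩
          rw [hxuv, dPow_append]
          push_cast at hyd ⊢
          linarith

/-- `boost_blocks` followed by `l` further letters, reproduced through `yb`, whose distortion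
slack below `D` compensates the loss on the uncovered blocks. -/
lemma boost_step {p : X → ℝ} (hp : IsDist p) (d : X → Y → ℝ) (D : ℝ) (yb : X → Y)
    {G : ℝ} (hG0 : 0 ≤ G) (hG : ∀ x, p x ≠ 0 → d x (yb x) - D ≤ G)
    (n₀ : ℕ) (C : Finset (Fin n₀ → Y)) (hC : C.Nonempty) (m l s : ℕ) :
    ∃ C' : Finset (Fin (n₀ * m + l) → Y),
      C'.card ≤ 2 ^ m * C.card ^ m * Fintype.card Y ^ (n₀ * s + l) ∧
      uncov p d D (n₀ * m + l) C' ≤ m * uncov p d D n₀ C / (s + 1) +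
        pr (iidP p l) (fun v => - (G * (n₀ * s)) < ∑ t, (d (v t) (yb (v t)) - D)) := by
  classical
  obtain ⟨F, hF, hcode⟩ := boost_blocks hp d D yb hG n₀ C hC m
  obtain ⟨C₁, hC₁, h₁⟩ := hcode s
  refine ⟨concat C₁ Finset.univ, ?_, ?_⟩
  · calc _ ≤ C₁.card * Fintype.card Y ^ l := by
          simpa using card_concat_le C₁ (Finset.univ : Finset (Fin l → Y))
      _ ≤ 2 ^ m * C.card ^ m * (Fintype.card Y ^ n₀) ^ s * Fintype.card Y ^ l := by gcongr
      _ = _ := by rw [pow_add, pow_mul]; ring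
  · have hmk : pr (iidP p (n₀ * m)) (fun u => s < F u) ≤ m * uncov p d D n₀ C / (s + 1) := by
      rw [le_div_iff₀ (by positivity), mul_comm, ← hF]
      exact pr_mul_le (iidP_isDist hp _).1 (fun _ => Nat.cast_nonneg _)
        fun u hu => by exact_mod_cast hu
    set P₂ : (Fin l → X) → Prop :=
      fun v => - (G * (n₀ * s)) < ∑ t, (d (v t) (yb (v t)) - D) with hP₂
    calc uncov p d D (n₀ * m + l) (concat C₁ Finset.univ)
        ≤ pr (iidP p (n₀ * m + l)) (fun x => s < F (fun i => x (Fin.castAdd l i)) ∨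
            P₂ (fun i => x (Fin.natAdd (n₀ * m) i))) := by
          refine pr_mono (iidP_isDist hp _).1 fun x hx hbad => ?_
          by_contra! hcon
          obtain ⟨hs, hP⟩ := hcon
          set u : Fin (n₀ * m) → X := fun i => x (Fin.castAdd l i) with hu
          set v : Fin l → X := fun i => x (Fin.natAdd (n₀ * m) i) with hv
          have hxuv : x = Fin.append u v := (Fin.append_castAdd_natAdd).symm
          rw [hxuv, iidP_append] at hx
          obtain ⟨y, hy, hyd⟩ := h₁ u (left_ne_zero_of_mul hx) hs
          have := hbad _ (append_mem_concat hy (Finset.mem_univ (fun i => yb (v i))))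
          rw [hxuv, dPow_append] at this
          simp only [hP₂, not_lt, Finset.sum_sub_distrib, Finset.sum_const, Finset.card_univ,
            Fintype.card_fin, nsmul_eq_mul] at hP
          have hs' : G * n₀ * F u ≤ G * n₀ * s := by gcongr
          have hdp : dPow d l v (fun i => yb (v i)) = ∑ t, d (v t) (yb (v t)) := rfl
          push_cast at this hyd
          linarith
      _ ≤ pr (iidP p (n₀ * m + l)) (fun x => s < F (fun i => x (Fin.castAdd l i))) +
            pr (iidP p (n₀ * m + l)) (fun x => P₂ (fun i => x (Fin.natAdd (n₀ * m) i))) :=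
          pr_or_le (iidP_isDist hp _).1 _ _
      _ = pr (iidP p (n₀ * m)) (fun u => s < F u) + pr (iidP p l) P₂ := by
          rw [pr_iidP_add_left hp (n₀ * m) l (fun u => s < F u), pr_iidP_add_right hp]
      _ ≤ _ := by gcongr

/-- Slack of the letterwise reproduction `yb`: with probability tending to one, `l ≥ lam * n`
letters reproduced through `yb` have distortion at most `l * D`, with room for an extra loss of
`G` on each of `θ * n` letters, where `G` bounds the loss of `yb` over `D` on the support. -/
def HasSlack {X Y : Type} [Fintype X] (p : X → ℝ) (d : X → Y → ℝ) (D : ℝ) (yb : X → Y) : Prop :=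
  ∃ G : ℝ, 0 ≤ G ∧ (∀ x, p x ≠ 0 → d x (yb x) - D ≤ G) ∧
    ∀ lam > 0, ∃ θ > 0, ∀ η > 0, ∃ N : ℕ, ∀ n ≥ N, ∀ l : ℕ, l ≤ n → lam * n ≤ (l : ℝ) →
      pr (iidP p l) (fun v => - (G * (θ * n)) < ∑ t, (d (v t) (yb (v t)) - D)) ≤ η

/-- A letterwise reproduction that meets `D` with probability tending to one either has mean
distortion below `D` or has distortion exactly `D` on the whole support; both give slack. -/
lemma hasSlack_of_tendsto {X Y : Type} [Fintype X] {p : X → ℝ} (hp : IsDist p)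
    (d : X → Y → ℝ) (D : ℝ) (yb : X → Y)
    (h : Tendsto (fun n => pr (iidP p n) (fun x => 0 < ∑ t, (d (x t) (yb (x t)) - D)))
      atTop (nhds 0)) : HasSlack p d D yb := by
  set g : X → ℝ := fun x => d x (yb x) - D with hg
  set μ := ev p g with hμ
  set c : X → ℝ := fun x => g x - μ with hc
  have hc0 : ev p c = 0 := by rw [hc, ev_sub, ev_const hp]; simp [hμ]
  have hvnn : 0 ≤ ev p (fun a => c a ^ 2) :=
    Finset.sum_nonneg fun a _ => mul_nonneg (hp.1 a) (sq_nonneg _)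
  have hsum : ∀ (n : ℕ) (x : Fin n → X), ∑ t, g (x t) = ∑ t, c (x t) + n * μ := by
    intro n x
    simp [hc]
  have hsupp : ∀ {n : ℕ} {x : Fin n → X}, iidP p n x ≠ 0 → ∀ t, p (x t) ≠ 0 :=
    fun hx t h0 => hx (Finset.prod_eq_zero (Finset.mem_univ t) h0)
  rcases lt_or_ge μ 0 with hneg | hpos
  · obtain ⟨G, hG⟩ : ∃ G : ℝ, ∀ x, g x ≤ G := by
      obtain ⟨G, hG⟩ := (Set.finite_range g).bddAbove
      exact ⟨G, fun x => hG ⟨x, rfl⟩⟩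
    set G' := max G 1
    have hG1 : 1 ≤ G' := le_max_right _ _
    refine ⟨G', by linarith, fun x _ => (hG x).trans (le_max_left _ _), fun lam hlam => ?_⟩
    refine ⟨(-μ) * lam / (2 * G'), div_pos (mul_pos (by linarith) hlam) (by linarith),
      fun η hη => ?_⟩
    set τ := (-μ) * lam / 2 with hτ
    have hτpos : 0 < τ := by have := mul_pos (neg_pos.2 hneg) hlam; positivity
    obtain ⟨N, hN⟩ := exists_nat_gt (ev p (fun a => c a ^ 2) / (τ ^ 2 * η))
    refine ⟨max N 1, fun n hn l hln hl => ?_⟩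
    have hn1 : (0 : ℝ) < n := by
      have : 1 ≤ n := (le_max_right _ _).trans hn
      exact_mod_cast this
    have hch := chebyshev hp hc0 l (t := τ * n) (by positivity)
    have hGe : G' * (-μ * lam / (2 * G') * n) = τ * n := by
      rw [hτ]; field_simp
    have hle : pr (iidP p l) (fun v => -(G' * (-μ * lam / (2 * G') * n)) < ∑ t, g (v t)) ≤
        pr (iidP p l) (fun v => τ * n < ∑ t, c (v t)) := by
      refine pr_mono (iidP_isDist hp l).1 fun v _ hv => ?_
      rw [hGe, hsum] at hv
      have : 2 * τ * n ≤ l * (-μ) := by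
        rw [hτ]; nlinarith
      linarith
    refine hle.trans ?_
    have hnN : ev p (fun a => c a ^ 2) / (τ ^ 2 * η) ≤ n := by
      have : (N : ℝ) ≤ n := by exact_mod_cast (le_max_left _ _).trans hn
      linarith
    rw [div_le_iff₀ (by positivity)] at hnN
    have hl' : (l : ℝ) * ev p (fun a => c a ^ 2) ≤ n * (n * (τ ^ 2 * η)) := by
      have : (l : ℝ) ≤ n := by exact_mod_cast hln
      gcongr
    have := hch.trans hl'
    have e : (n : ℝ) * (n * (τ ^ 2 * η)) = (τ * n) ^ 2 * η := by ring
    rw [e] at this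
    exact le_of_mul_le_mul_left this (by positivity)
  · have hv0 : ev p (fun a => c a ^ 2) = 0 := by
      by_contra hne
      obtain ⟨κ, hκ, hanti⟩ := anticoncentration hp hc0 (lt_of_le_of_ne hvnn (Ne.symm hne))
      obtain ⟨n, hn1, hn2⟩ := ((h.eventually (gt_mem_nhds hκ)).and (eventually_gt_atTop 0)).exists
      have := hanti n hn2
      have hle : pr (iidP p n) (fun x => 0 < ∑ t, c (x t)) ≤
          pr (iidP p n) (fun x => 0 < ∑ t, g (x t)) := by
        refine pr_mono (iidP_isDist hp n).1 fun x _ hx => ?_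
        rw [hsum]
        have : 0 ≤ n * μ := by positivity
        linarith
      linarith
    have hcz : ∀ x, p x ≠ 0 → g x = μ := by
      intro x hx
      have := (Finset.sum_eq_zero_iff_of_nonneg
        (fun a _ => mul_nonneg (hp.1 a) (sq_nonneg (c a)))).1 hv0 x (Finset.mem_univ _)
      have h2 : c x = 0 := by simpa [hx] using this
      simp only [hc] at h2
      linarith
    have hμ0 : μ = 0 := by
      by_contra hne
      have hμp : 0 < μ := lt_of_le_of_ne hpos (Ne.symm hne)
      obtain ⟨n, hn1, hn2⟩ := ((h.eventually (gt_mem_nhds one_pos)).and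
        (eventually_gt_atTop 0)).exists
      have : (1 : ℝ) ≤ pr (iidP p n) (fun x => 0 < ∑ t, g (x t)) := by
        rw [← ev_const (iidP_isDist hp n) 1]
        refine ev_mono (iidP_isDist hp n).1 fun x hx => ?_
        rw [if_pos]
        change 0 < ∑ t, g (x t)
        rw [Finset.sum_congr rfl fun t _ => hcz _ (hsupp hx t)]
        simp [hμp, hn2]
      linarith
    refine ⟨0, le_rfl, fun x hx => by have := hcz x hx; rw [hμ0] at this; exact this.le,
      fun lam _ => ⟨1, one_pos, fun η hη => ⟨0, fun n _ l _ _ => ?_⟩⟩⟩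
    have : pr (iidP p l) (fun v => -(0 * (1 * (n : ℝ))) < ∑ t, g (v t)) ≤
        pr (iidP p l) (fun _ => False) := by
      refine pr_mono (iidP_isDist hp l).1 fun x hx h => ?_
      rw [Finset.sum_congr rfl fun t _ => hcz _ (hsupp hx t)] at h
      simp [hμ0] at h
    refine this.trans ?_
    simpa [pr, ev] using hη.le

/-- If coverings of rate `R₁` succeed with probability arbitrarily close to one at arbitrarily large
block lengths, then coverings of any rate `R₂ > R₁` do so at every large block length. -/
lemma boost [Nonempty Y] {p : X → ℝ} (hp : IsDist p) (d : X → Y → ℝ) (D : ℝ) (yb : X → Y)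
    (hsl : HasSlack p d D yb) {R₁ R₂ : ℝ} (hR₁ : 0 ≤ R₁) (hR : R₁ < R₂)
    (H : ∀ ε > 0, ∀ N : ℕ, ∃ n ≥ N, ∃ C : Finset (Fin n → Y),
      C.card ≤ nMsg R₁ n ∧ uncov p d D n C < ε) :
    ∀ η > 0, ∃ N : ℕ, ∀ n ≥ N, ∃ C : Finset (Fin n → Y),
      C.card ≤ nMsg R₂ n ∧ uncov p d D n C ≤ η := by
  intro η hη
  obtain ⟨G, hG0, hG, hslack⟩ := hsl
  -- The rate gap `Δ` is spent in quarters: on the positions of the uncovered blocks, on those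
  -- blocks themselves (fraction `θ`), on the further letters (fraction `lam`), and on rounding.
  set Δ := R₂ - R₁ with hΔ
  have hΔ0 : 0 < Δ := by linarith
  set b : ℝ := (Fintype.card Y : ℝ) with hb
  have hb0 : 0 < b := by rw [hb]; exact_mod_cast Fintype.card_pos
  set lam := min 1 (Δ / (4 * b)) with hlam
  have hlam0 : 0 < lam := lt_min one_pos (by positivity)
  have hlam1 : lam ≤ 1 := min_le_left _ _
  have hlamb : b * lam ≤ Δ / 4 := by
    have := mul_le_mul_of_nonneg_left (min_le_right 1 (Δ / (4 * b))) hb0.le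
    calc _ ≤ b * (Δ / (4 * b)) := this
      _ = _ := by field_simp
  obtain ⟨θ₀, hθ₀, hslack⟩ := hslack lam hlam0
  set θ := min θ₀ (Δ / (4 * b)) with hθdef
  have hθ0 : 0 < θ := lt_min hθ₀ (by positivity)
  have hθle : θ ≤ θ₀ := min_le_left _ _
  have hθb : b * θ ≤ Δ / 4 := by
    have := mul_le_mul_of_nonneg_left (min_le_right θ₀ (Δ / (4 * b))) hb0.le
    calc _ ≤ b * (Δ / (4 * b)) := this
      _ = _ := by field_simp
  obtain ⟨N₁, hN₁⟩ := hslack (η / 2) (by positivity)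
  obtain ⟨N₀, hN₀⟩ := exists_nat_gt (4 / Δ)
  obtain ⟨n₀, hn₀, C, hCcard, hCun⟩ := H (min 1 (θ * η / 2)) (lt_min one_pos (by positivity))
    (max N₀ 1)
  have hn₀1 : (0 : ℝ) < n₀ := by
    have : 1 ≤ n₀ := (le_max_right _ _).trans hn₀
    exact_mod_cast this
  have hn₀Δ : 4 ≤ n₀ * Δ := by
    have h1 : (N₀ : ℝ) ≤ n₀ := by exact_mod_cast (le_max_left _ _).trans hn₀
    have := hN₀.le.trans h1
    rwa [div_le_iff₀ hΔ0] at this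
  have hCne : C.Nonempty := by
    by_contra hne
    rw [Finset.not_nonempty_iff_eq_empty] at hne
    have h1 : uncov p d D n₀ C = 1 := by
      rw [hne]
      simpa [uncov, pr] using ev_const (iidP_isDist hp n₀) 1
    rw [h1] at hCun
    exact absurd (lt_min_iff.1 hCun).1 (lt_irrefl _)
  have hunn : 0 ≤ uncov p d D n₀ C := pr_nonneg (iidP_isDist hp n₀).1 _
  have hun : uncov p d D n₀ C ≤ θ * η / 2 := (lt_min_iff.1 hCun).2.le
  obtain ⟨N₂, hN₂⟩ := exists_nat_gt (4 * b * n₀ / Δ)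
  refine ⟨max N₁ N₂, fun n hn => ?_⟩
  have hnN₂ : b * n₀ ≤ n * Δ / 4 := by
    have h1 : (N₂ : ℝ) ≤ n := by exact_mod_cast (le_max_right _ _).trans hn
    have := hN₂.le.trans h1
    rw [div_le_iff₀ hΔ0] at this
    linarith
  obtain ⟨m, hm1, hm2⟩ : ∃ m : ℕ, (n₀ : ℝ) * m ≤ (1 - lam) * n ∧
      (1 - lam) * n ≤ n₀ * m + n₀ := by
    refine ⟨⌊(1 - lam) * n / n₀⌋₊, ?_, ?_⟩
    · have := Nat.floor_le (a := (1 - lam) * n / n₀)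
        (div_nonneg (mul_nonneg (by linarith) (Nat.cast_nonneg _)) hn₀1.le)
      rw [le_div_iff₀ hn₀1] at this
      linarith
    · have := (Nat.lt_floor_add_one ((1 - lam) * n / n₀)).le
      rw [div_le_iff₀ hn₀1] at this
      linarith
  have hnm : n₀ * m ≤ n := by
    have : (n₀ : ℝ) * m ≤ n := by nlinarith [Nat.cast_nonneg (α := ℝ) n]
    exact_mod_cast this
  obtain ⟨l, rfl⟩ := Nat.exists_eq_add_of_le hnm
  have hnm' : (n₀ : ℝ) * m ≤ (n₀ * m + l : ℕ) := by exact_mod_cast hnm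
  set n := n₀ * m + l with hn_def
  have hnl : (n : ℝ) = n₀ * m + l := by rw [hn_def]; push_cast; ring
  have hl1 : lam * n ≤ l := by linarith
  have hl2 : (l : ℝ) ≤ lam * n + n₀ := by linarith
  set s := ⌊θ * m⌋₊ with hs
  have hs1 : (s : ℝ) ≤ θ * m := Nat.floor_le (by positivity)
  have hs2 : θ * m ≤ s + 1 := (Nat.lt_floor_add_one _).le
  have hn₀s : (n₀ : ℝ) * s ≤ θ * n := by
    calc (n₀ : ℝ) * s ≤ n₀ * (θ * m) := by gcongr
      _ = θ * (n₀ * m) := by ring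
      _ ≤ θ * n := by gcongr
  obtain ⟨C', hC'card, hC'un⟩ := boost_step hp d D yb hG0 hG n₀ C hCne m l s
  refine ⟨C', hC'card.trans ?_, hC'un.trans ?_⟩
  · calc 2 ^ m * C.card ^ m * Fintype.card Y ^ (n₀ * s + l)
        ≤ 2 ^ m * (2 ^ ⌊(n₀ : ℝ) * R₁⌋₊) ^ m * (2 ^ Fintype.card Y) ^ (n₀ * s + l) := by
          gcongr
          · exact hCcard
          · exact Nat.lt_two_pow_self.le
      _ = 2 ^ (m + ⌊(n₀ : ℝ) * R₁⌋₊ * m + Fintype.card Y * (n₀ * s + l)) := by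
          rw [← pow_mul, ← pow_mul, ← pow_add, ← pow_add]
      _ ≤ nMsg R₂ n := by
          refine Nat.pow_le_pow_right (by norm_num) (Nat.le_floor ?_)
          push_cast
          rw [← hb]
          have hfl : (⌊(n₀ : ℝ) * R₁⌋₊ : ℝ) ≤ n₀ * R₁ := Nat.floor_le (by positivity)
          have t1 : (m : ℝ) ≤ n * Δ / 4 := by
            have h1 : (4 : ℝ) * m ≤ n₀ * Δ * m := by gcongr
            have h2 : Δ * ((n₀ : ℝ) * m) ≤ Δ * n := by gcongr
            linarith
          have t2 : (⌊(n₀ : ℝ) * R₁⌋₊ : ℝ) * m ≤ n * R₁ := by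
            calc _ ≤ (n₀ * R₁) * (m : ℝ) := by gcongr
              _ = R₁ * (n₀ * m) := by ring
              _ ≤ R₁ * n := by gcongr
              _ = _ := by ring
          have t3 : b * (n₀ * s) ≤ n * Δ / 4 := by
            calc _ ≤ b * (θ * n) := by gcongr
              _ = (b * θ) * n := by ring
              _ ≤ Δ / 4 * n := by gcongr
              _ = _ := by ring
          have t4 : b * l ≤ n * Δ / 2 := by
            calc _ ≤ b * (lam * n + n₀) := by gcongr
              _ = (b * lam) * n + b * n₀ := by ring
              _ ≤ Δ / 4 * n + n * Δ / 4 := by gcongr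
              _ = _ := by ring
          have e : n * R₂ = n * R₁ + n * Δ := by rw [hΔ]; ring
          rw [e]
          linarith
  · have h1 : m * uncov p d D n₀ C / (s + 1) ≤ η / 2 := by
      rw [div_le_iff₀ (by positivity)]
      calc m * uncov p d D n₀ C ≤ m * (θ * η / 2) := by gcongr
        _ = η / 2 * (θ * m) := by ring
        _ ≤ η / 2 * (s + 1) := by gcongr
    have h2 : pr (iidP p l) (fun v => - (G * (n₀ * s)) < ∑ t, (d (v t) (yb (v t)) - D)) ≤
        η / 2 := by
      refine le_trans (pr_mono (iidP_isDist hp l).1 fun v _ hv => ?_)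
        (hN₁ n ((le_max_left _ _).trans hn) l (by omega) hl1)
      have : G * (n₀ * s) ≤ G * (θ₀ * n) := by
        refine mul_le_mul_of_nonneg_left (hn₀s.trans ?_) hG0
        gcongr
      linarith
    linarith

end Boost

/-! ### Optimal source codes -/

section SourceCode

variable {X Y : Type} [Fintype X] [DecidableEq X] [Fintype Y]

/-- A family of codewords `φ`, used with the encoder that looks for a codeword within distortion
`n * D`, is a source code whose excess probability is the uncovered probability of `φ`. -/
lemma exists_source_code (p : X → ℝ) (d : X → Y → ℝ) (D R : ℝ) (n : ℕ)
    (φ : Fin (nMsg R n) → (Fin n → Y)) :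
    ∃ τ : RandCode (Fin n → X) (Fin (nMsg R n)) (Fin (nMsg R n)) (Fin n → Y),
      srcExcess p d D R n τ =
        pr (iidP p n) (fun x => ∀ i, (n : ℝ) * D < dPow d n x (φ i)) := by
  classical
  have hpos : 0 < nMsg R n := by unfold nMsg; positivity
  set e : (Fin n → X) → Fin (nMsg R n) := fun x =>
    if h : ∃ i, dPow d n x (φ i) ≤ n * D then h.choose else ⟨0, hpos⟩ with he
  refine ⟨⟨fun ef => if ef = (e, φ) then 1 else 0, fun a => by dsimp only; split_ifs <;> norm_num,
    by simp⟩, ?_⟩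
  simp only [srcExcess, ite_mul, one_mul, zero_mul, Finset.sum_ite_eq', Finset.mem_univ, if_true]
  unfold pr ev
  refine Finset.sum_congr rfl fun x _ => ?_
  congr 1
  dsimp only
  by_cases h : ∃ i, dPow d n x (φ i) ≤ n * D
  · have h1 : e x = h.choose := by simp only [he]; rw [dif_pos h]
    have h2 : dPow d n x (φ (e x)) ≤ n * D := by rw [h1]; exact h.choose_spec
    have h3 : ¬ ∀ i, (n : ℝ) * D < dPow d n x (φ i) := by push Not; exact h
    rw [if_neg h3, if_neg (not_lt.2 h2)]
  · push Not at h
    rw [if_pos h, if_pos (h _)]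

/-- Coverings at all large block lengths give source codes with vanishing excess probability. Taking
the best code at each block length makes a single sequence serve every `η`. -/
lemma exists_source_codes [Nonempty Y] {p : X → ℝ} (hp : IsDist p) (d : X → Y → ℝ) (D R : ℝ)
    (H : ∀ η > 0, ∃ N : ℕ, ∀ n ≥ N, ∃ C : Finset (Fin n → Y),
      C.card ≤ nMsg R n ∧ uncov p d D n C ≤ η) :
    ∃ τ : ∀ n : ℕ, RandCode (Fin n → X) (Fin (nMsg R n)) (Fin (nMsg R n)) (Fin n → Y),
      Tendsto (fun n => srcExcess p d D R n (τ n)) atTop (nhds 0) := by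
  have hmin : ∀ n, ∃ φ : Fin (nMsg R n) → (Fin n → Y), ∀ ψ : Fin (nMsg R n) → (Fin n → Y),
      pr (iidP p n) (fun x => ∀ i, (n : ℝ) * D < dPow d n x (φ i)) ≤
        pr (iidP p n) (fun x => ∀ i, (n : ℝ) * D < dPow d n x (ψ i)) := fun n =>
    Finite.exists_min (fun φ : Fin (nMsg R n) → (Fin n → Y) =>
      pr (iidP p n) (fun x => ∀ i, (n : ℝ) * D < dPow d n x (φ i)))
  choose φ hφ using hmin
  choose τ hτ using fun n => exists_source_code p d D R n (φ n)
  refine ⟨τ, ?_⟩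
  simp only [hτ]
  rw [Metric.tendsto_atTop]
  intro ε hε
  obtain ⟨N, hN⟩ := H (ε / 2) (by positivity)
  refine ⟨N, fun n hn => ?_⟩
  obtain ⟨C, hC, hun⟩ := hN n hn
  obtain ⟨ψ, hψ⟩ : ∃ ψ : Fin (nMsg R n) → (Fin n → Y), ∀ y ∈ C, ∃ i, ψ i = y := by
    rcases C.eq_empty_or_nonempty with rfl | hne
    · exact ⟨fun _ _ => Classical.arbitrary Y, by simp⟩
    · have hemb : Nonempty (C ↪ Fin (nMsg R n)) :=
        Function.Embedding.nonempty_of_card_le (by simpa using hC)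
      obtain ⟨g⟩ := hemb
      have : Nonempty C := hne.to_subtype
      refine ⟨fun i => (Function.invFun g i : C), fun y hy => ⟨g ⟨y, hy⟩, ?_⟩⟩
      dsimp only
      rw [Function.leftInverse_invFun g.injective]
  have h0 := pr_nonneg (iidP_isDist hp n).1 (fun x => ∀ i, (n : ℝ) * D < dPow d n x (φ n i))
  rw [Real.dist_eq, sub_zero, abs_of_nonneg h0]
  have : pr (iidP p n) (fun x => ∀ i, (n : ℝ) * D < dPow d n x (ψ i)) ≤ uncov p d D n C := by
    refine pr_mono (iidP_isDist hp n).1 fun x _ hx y hy => ?_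
    obtain ⟨i, rfl⟩ := hψ y hy
    exact hx i
  linarith [hφ n ψ]

end SourceCode

/-! ### The separation argument -/

lemma tendsto_nMsg_div {R R₁ : ℝ} (hR0 : 0 ≤ R) (hR : R < R₁) :
    Tendsto (fun n => (nMsg R n : ℝ) * (1 / nMsg R₁ n)) atTop (nhds 0) := by
  have hlim : Tendsto (fun n : ℕ => 2 * ((2 : ℝ) ^ (R - R₁)) ^ n) atTop (nhds 0) := by
    rw [show (0 : ℝ) = 2 * 0 by ring]
    exact (tendsto_pow_atTop_nhds_zero_of_lt_one (by positivity)
      (Real.rpow_lt_one_of_one_lt_of_neg (by norm_num) (by linarith))).const_mul 2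
  refine squeeze_zero (fun n => by positivity) (fun n => ?_) hlim
  have h1 : (nMsg R n : ℝ) ≤ (2 : ℝ) ^ (n * R) := by
    unfold nMsg
    push_cast
    rw [← Real.rpow_natCast]
    exact Real.rpow_le_rpow_of_exponent_le (by norm_num) (Nat.floor_le (by positivity))
  have h2 : (2 : ℝ) ^ (n * R₁ - 1) ≤ (nMsg R₁ n : ℝ) := by
    unfold nMsg
    push_cast
    rw [← Real.rpow_natCast]
    refine Real.rpow_le_rpow_of_exponent_le (by norm_num) ?_
    have := Nat.lt_floor_add_one ((n : ℝ) * R₁)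
    linarith
  have h3 : (0 : ℝ) < (2 : ℝ) ^ (n * R₁ - 1) := by positivity
  calc (nMsg R n : ℝ) * (1 / nMsg R₁ n) ≤ (2 : ℝ) ^ (n * R) * (1 / (2 : ℝ) ^ (n * R₁ - 1)) := by
        gcongr
    _ = 2 * ((2 : ℝ) ^ (R - R₁)) ^ n := by
        rw [one_div, ← Real.rpow_neg (by norm_num), ← Real.rpow_add (by norm_num),
          ← Real.rpow_natCast, ← Real.rpow_mul (by norm_num),
          show n * R + -(n * R₁ - 1) = 1 + (R - R₁) * n by ring,
          Real.rpow_add (by norm_num), Real.rpow_one]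

/-- Communication within distortion `D` forces the best letterwise reproduction to meet `D` with
probability tending to one, since no output can beat it. -/
lemma letterwise_tendsto {pX : 𝒳 → ℝ} (hpX : IsDist pX) {d : 𝒳 → 𝒴 → ℝ} {D : ℝ}
    {k : Channel ℐ 𝒪}
    (ρ : ∀ n : ℕ, RandCode (Fin n → 𝒳) (Fin n → ℐ) (Fin n → 𝒪) (Fin n → 𝒴))
    {ω : ℕ → ℝ} (hω : Tendsto ω atTop (nhds 0))
    (h : ∀ n, e2eExcess pX d D n (ρ n) k ≤ ω n)
    (yb : 𝒳 → 𝒴) (hyb : ∀ x y, d x (yb x) ≤ d x y) :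
    Tendsto (fun n => pr (iidP pX n) (fun x => 0 < ∑ t, (d (x t) (yb (x t)) - D)))
      atTop (nhds 0) := by
  refine squeeze_zero (fun n => pr_nonneg (iidP_isDist hpX n).1 _) (fun n => ?_) hω
  refine le_trans ?_ (h n)
  rw [← ev_const (ρ n).isDist (pr (iidP pX n) _)]
  refine ev_mono (ρ n).isDist.1 fun ef _ => ?_
  refine ev_mono (iidP_isDist hpX n).1 fun x _ => ?_
  rw [← ev_const (k.isChan n (ef.1 x)) (ite _ _ _)]
  refine ev_mono (k.isChan n _).1 fun o _ => ?_
  by_cases h1 : 0 < ∑ t, (d (x t) (yb (x t)) - D)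
  · have h2 : (n : ℝ) * D < dPow d n x (ef.2 o) := by
      have h3 : ∑ t, d (x t) (yb (x t)) ≤ dPow d n x (ef.2 o) :=
        Finset.sum_le_sum fun t _ => hyb _ _
      rw [Finset.sum_sub_distrib] at h1
      simp only [Finset.sum_const, Finset.card_univ, Fintype.card_fin, nsmul_eq_mul] at h1
      linarith
    rw [if_pos h1, if_pos h2]
  · rw [if_neg h1]
    split_ifs <;> norm_num

/-- The one-shot step at block length `n`. If no `K` reproductions cover the source with
probability more than `1 - ε₀`, the source conditioned on what a greedy family of `K`
reproductions leaves uncovered is a good codeword distribution: no reproduction is within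
distortion of more than `1 / (K * ε₀)` of it, and the excess probability grows at most by the
factor `1 / ε₀`. -/
lemma exists_code_at {pX : 𝒳 → ℝ} (hpX : IsDist pX) {d : 𝒳 → 𝒴 → ℝ} {D : ℝ} {n : ℕ}
    (ρ : RandCode (Fin n → 𝒳) (Fin n → ℐ) (Fin n → 𝒪) (Fin n → 𝒴))
    {K : ℕ} (hK : 0 < K) {ε₀ : ℝ} (hε₀ : 0 < ε₀)
    (H : ∀ C : Finset (Fin n → 𝒴), C.card ≤ K → ε₀ ≤ uncov pX d D n C) (R : ℝ) :
    ∃ σ : RandCode (Fin (nMsg R n)) (Fin n → ℐ) (Fin n → 𝒪) (Option (Fin (nMsg R n))),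
      ∀ k : Channel ℐ 𝒪, ∀ m, chErr R n σ k m ≤
        e2eExcess pX d D n ρ k / ε₀ + nMsg R n * (1 / K) / ε₀ := by
  classical
  have hP := iidP_isDist hpX n
  have hK' : (0 : ℝ) < K := by exact_mod_cast hK
  obtain ⟨C, hC, hcov⟩ := greedy_cover hP (θ := 1 / K)
    (fun (y : Fin n → 𝒴) x => ¬ (n : ℝ) * D < dPow d n x y) (by positivity)
  have hCK : C.card ≤ K := by
    rw [mul_one_div, div_le_one hK'] at hC
    exact_mod_cast hC
  set U : (Fin n → 𝒳) → Prop := fun x => ∀ y ∈ C, (n : ℝ) * D < dPow d n x y with hU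
  set u := uncov pX d D n C with hu
  have hεu : ε₀ ≤ u := H C hCK
  have hu0 : 0 < u := hε₀.trans_le hεu
  set Q : (Fin n → 𝒳) → ℝ := fun x => iidP pX n x * (if U x then 1 else 0) / u with hQ
  have hevQ : ∀ f, ev Q f = ev (iidP pX n) (fun x => (if U x then 1 else 0) * f x) / u := by
    intro f
    simp only [ev, hQ, Finset.sum_div]
    exact Finset.sum_congr rfl fun x _ => by ring
  have hupr : ev (iidP pX n) (fun x => if U x then 1 else 0) = u := by
    rw [hu, uncov, pr]
    congr!
  have hQd : IsDist Q := by
    refine ⟨fun x => div_nonneg (mul_nonneg (hP.1 x) (by split_ifs <;> norm_num)) hu0.le, ?_⟩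
    have := hevQ (fun _ => 1)
    simp only [mul_one, hupr, div_self hu0.ne'] at this
    simpa [ev] using this
  obtain ⟨σ, hσ⟩ := exists_channel_code ρ hQd (fun x y => (n : ℝ) * D < dPow d n x y)
    (θ := 1 / K / ε₀) (by positivity) (fun y => by
      rw [pr, hevQ]
      calc _ ≤ 1 / (K : ℝ) / u := by
            refine div_le_div_of_nonneg_right (le_trans (le_of_eq ?_) (hcov y)) hu0.le
            rw [pr]
            congr 1
            funext x
            by_cases h1 : U x
            · have h1' : ∀ y' ∈ C, (n : ℝ) * D < dPow d n x y' := h1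
              by_cases h2 : (n : ℝ) * D < dPow d n x y
              · simp [h1, h2]
              · have h3 : ∀ y' ∈ C, ¬ ¬ (n : ℝ) * D < dPow d n x y' :=
                  fun y' hy' => not_not.2 (h1' y' hy')
                rw [if_pos h1, if_pos h2, if_pos ⟨h2, h3⟩, one_mul]
            · have h3 : ¬ (¬ (n : ℝ) * D < dPow d n x y ∧
                  ∀ y' ∈ C, ¬ ¬ (n : ℝ) * D < dPow d n x y') :=
                fun h => h1 fun y' hy' => not_not.1 (h.2 y' hy')
              rw [if_neg h1, if_neg h3, zero_mul]
        _ ≤ 1 / (K : ℝ) / ε₀ := by gcongr) (nMsg R n)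
  refine ⟨σ, fun k m => ?_⟩
  have h1 := hσ (k.k n) (k.isChan n) m
  have hch : chErr R n σ k m = ev σ.p (fun ef => ev (k.k n (ef.1 m))
      (fun o => if ef.2 o = some m then 0 else 1)) := by
    simp only [chErr, ev]
  have hnn : ∀ ef : ((Fin n → 𝒳) → (Fin n → ℐ)) × ((Fin n → 𝒪) → (Fin n → 𝒴)), ∀ x,
      0 ≤ pr (k.k n (ef.1 x)) (fun o => (n : ℝ) * D < dPow d n x (ef.2 o)) :=
    fun ef x => pr_nonneg (k.isChan n _).1 _
  have hexc : ev ρ.p (fun ef => ev Q (fun x => pr (k.k n (ef.1 x))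
      (fun o => (n : ℝ) * D < dPow d n x (ef.2 o)))) ≤ e2eExcess pX d D n ρ k / ε₀ := by
    have he : e2eExcess pX d D n ρ k = ev ρ.p (fun ef => ev (iidP pX n) (fun x =>
        pr (k.k n (ef.1 x)) (fun o => (n : ℝ) * D < dPow d n x (ef.2 o)))) := by
      simp only [e2eExcess, pr, ev]
    rw [he, div_eq_inv_mul, ← ev_mul_left]
    refine ev_mono ρ.isDist.1 fun ef _ => ?_
    rw [hevQ, ← div_eq_inv_mul]
    have hfull : 0 ≤ ev (iidP pX n) (fun x =>
        pr (k.k n (ef.1 x)) (fun o => (n : ℝ) * D < dPow d n x (ef.2 o))) :=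
      Finset.sum_nonneg fun x _ => mul_nonneg (hP.1 x) (hnn ef x)
    refine div_le_div₀ hfull (ev_mono hP.1 fun x _ => ?_) hε₀ hεu
    have := hnn ef x
    split_ifs <;> linarith
  rw [hch]
  calc _ ≤ _ := h1
    _ ≤ _ := by rw [mul_div_assoc]; gcongr

/-- If random codes are permitted, `D ≥ 0`, and the compound channel `𝒜`
is capable of communicating the i.i.d. `X` source to within distortion `D` under the additive
distortion function `d^n`, then every rate `0 < R < R^P_X(D)` is reliably achievable over `𝒜`
with random codes. -/
theorem stmt0 (pX : 𝒳 → ℝ) (hpX : IsDist pX)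
    (d : 𝒳 → 𝒴 → ℝ) (hd : ∀ x y, 0 ≤ d x y)
    (D : ℝ) (hD : 0 ≤ D)
    (𝒜 : Set (Channel ℐ 𝒪))
    (hcap : CanCommunicate 𝒜 pX d D)
    (R : ℝ) (hR0 : 0 < R) (hR : ENNReal.ofReal R < RP pX d D) :
    ReliablyAchievable 𝒜 R := by
  classical
  obtain ⟨ρ, ω, hω, hcom⟩ := hcap
  have hX : Nonempty 𝒳 := by
    by_contra hne
    rw [not_nonempty_iff] at hne
    have := hpX.2
    simp at this
  have hI : Nonempty ℐ := by
    by_contra hne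
    rw [not_nonempty_iff] at hne
    have hem : IsEmpty (((Fin 1 → 𝒳) → (Fin 1 → ℐ)) × ((Fin 1 → 𝒪) → (Fin 1 → 𝒴))) :=
      ⟨fun ef => hne.elim (ef.1 (fun _ => hX.some) 0)⟩
    have := (ρ 1).isDist.2
    simp at this
  -- an arbitrary code, for the block lengths at which nothing is claimed
  have hdef : ∀ n, Nonempty (RandCode (Fin (nMsg R n)) (Fin n → ℐ) (Fin n → 𝒪)
      (Option (Fin (nMsg R n)))) := fun n =>
    ⟨⟨fun ef => if ef = (fun _ _ => hI.some, fun _ => none) then 1 else 0,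
      fun a => by dsimp only; split_ifs <;> norm_num, by simp⟩⟩
  rcases 𝒜.eq_empty_or_nonempty with rfl | ⟨k₀, hk₀⟩
  · exact ⟨fun n => (hdef n).some, fun _ => 0, tendsto_const_nhds, fun n k hk => hk.elim⟩
  have hY : Nonempty 𝒴 := by
    by_contra hne
    rw [not_nonempty_iff] at hne
    have hO : IsEmpty 𝒪 := by
      by_contra hO
      rw [not_isEmpty_iff] at hO
      have hem : IsEmpty (((Fin 1 → 𝒳) → (Fin 1 → ℐ)) × ((Fin 1 → 𝒪) → (Fin 1 → 𝒴))) :=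
        ⟨fun ef => hne.elim (ef.2 (fun _ => hO.some) 0)⟩
      have := (ρ 1).isDist.2
      simp at this
    have := (k₀.isChan 1 (fun _ => hI.some)).2
    simp at this
  obtain ⟨r, hRr, hrP⟩ := exists_between hR
  have hrtop : r ≠ ⊤ := ne_top_of_lt hrP
  set R₂ := r.toReal with hR₂
  have hRR₂ : R < R₂ := (ENNReal.ofReal_lt_iff_lt_toReal hR0.le hrtop).1 hRr
  have hno : ¬ ∃ τ : ∀ n : ℕ, RandCode (Fin n → 𝒳) (Fin (nMsg R₂ n)) (Fin (nMsg R₂ n))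
      (Fin n → 𝒴), Tendsto (fun n => srcExcess pX d D R₂ n (τ n)) atTop (nhds 0) := by
    intro hτ
    have : RP pX d D ≤ r :=
      sInf_le ⟨R₂, hR0.trans hRR₂, hτ, (ENNReal.ofReal_toReal hrtop).symm⟩
    exact absurd hrP (not_lt.2 this)
  obtain ⟨R₁, hRR₁, hR₁₂⟩ := exists_between hRR₂
  choose yb hyb using fun x : 𝒳 => Finite.exists_min (d x)
  have hsl : HasSlack pX d D yb := hasSlack_of_tendsto hpX d D yb
    (letterwise_tendsto hpX ρ hω (fun n => hcom n k₀ hk₀) yb hyb)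
  have hcov : ∃ ε₀ > 0, ∃ N : ℕ, ∀ n ≥ N, ∀ C : Finset (Fin n → 𝒴),
      C.card ≤ nMsg R₁ n → ε₀ ≤ uncov pX d D n C := by
    by_contra! hcon
    exact hno (exists_source_codes hpX d D R₂
      (boost hpX d D yb hsl (hR0.trans hRR₁).le hR₁₂ hcon))
  obtain ⟨ε₀, hε₀, N, hN⟩ := hcov
  have hcode : ∀ n, ∃ σ : RandCode (Fin (nMsg R n)) (Fin n → ℐ) (Fin n → 𝒪)
      (Option (Fin (nMsg R n))), n ≥ N → ∀ k : Channel ℐ 𝒪, ∀ m, chErr R n σ k m ≤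
        e2eExcess pX d D n (ρ n) k / ε₀ + nMsg R n * (1 / nMsg R₁ n) / ε₀ := by
    intro n
    by_cases hn : n ≥ N
    · obtain ⟨σ, hσ⟩ := exists_code_at hpX (d := d) (D := D) (ρ n) (K := nMsg R₁ n)
        (by unfold nMsg; positivity) hε₀ (hN n hn) R
      exact ⟨σ, fun _ => hσ⟩
    · exact ⟨(hdef n).some, fun h => absurd h hn⟩
  choose σ hσ using hcode
  refine ⟨σ, fun n => if n ≥ N then ω n / ε₀ + nMsg R n * (1 / nMsg R₁ n) / ε₀ else 1, ?_, ?_⟩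
  · have hlim : Tendsto (fun n => ω n / ε₀ + nMsg R n * (1 / nMsg R₁ n) / ε₀) atTop
        (nhds 0) := by
      simpa using (hω.div_const ε₀).add ((tendsto_nMsg_div hR0.le hRR₁).div_const ε₀)
    refine hlim.congr' ?_
    filter_upwards [eventually_ge_atTop N] with n hn
    rw [if_pos hn]
  · intro n k hk m
    by_cases hn : n ≥ N
    · simp only [if_pos hn]
      refine (hσ n hn k m).trans ?_
      gcongr
      exact hcom n k hk
    · simp only [if_neg hn]
      refine le_trans (ev_mono (σ n).isDist.1 (g := fun _ => 1) fun ef _ => ?_)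
        (ev_const (σ n).isDist 1).le
      refine le_trans (ev_mono (k.isChan n (ef.1 m)).1 (g := fun _ => 1) fun o _ => ?_)
        (ev_const (k.isChan n (ef.1 m)) 1).le
      split_ifs <;> norm_num

end
end

section
/- Assume random encoder–decoder pairs are permitted. Let D ≥ 0. If some rate R with R > R^P_X(D) is reliably achievable over the compound channel 𝒜 with random codes, then 𝒜 is capable of communicating the i.i.d. X source to within distortion D under the additive distortion function d^n (probability-of-excess-distortion criterion, uniformly over k ∈ 𝒜), and this can be accomplished by a separation architecture, i.e., by encoder–decoder pairs of the form (e_s^n ∘ e_c^n, f_c^n ∘ f_s^n) composed of a source code and a channel code. -/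
/-!
Why the theorem holds. Since `R^P_X(D) < R`, some rate `R' < R` admits source codes whose excess
distortion probability tends to zero. As `nMsg R' n ≤ nMsg R n`, such a code becomes a rate-`R`
code by embedding the smaller message set into the larger one and extending the decoder
arbitrarily (`exists_srcExcess_eq`). Compose it with the channel codes achieving rate `R`: the
distortion can be excessive only if the source code itself already exceeds `D` on `x`, or the
channel decoder fails to return the transmitted message. The union bound gives
`sepExcess ≤ srcExcess + δ n` uniformly over the compound channel
(`sepExcess_le`), because the error bound `δ n` holds for *every* message, hence also on average
over the random message produced by the source encoder.
-/

/-!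
Statement 0: Optimality of separation, direct part (Part I, Theorem 1, first half).
If the compound channel 𝒜 can communicate the i.i.d. X source to within distortion D
(probability-of-excess-distortion criterion, uniformly over k ∈ 𝒜, random codes allowed),
then every rate 0 < R < R^P_X(D) is reliably achievable over 𝒜 with random codes.
-/

open Finset Filter
open scoped ENNReal

noncomputable section

variable {𝒳 𝒴 ℐ 𝒪 : Type} [Fintype 𝒳] [DecidableEq 𝒳] [Fintype 𝒴]
  [Fintype ℐ] [Fintype 𝒪] [DecidableEq 𝒪]

/-- Probability of excess distortion of the separation-based architecture
`(e_s ∘ e_c, f_c ∘ f_s)`: source code `τ`, channel code `σ` (with `yerr` the reproduction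
emitted upon the channel decoder's error symbol), over channel `k`, at block length `n`. -/
def sepExcess (pX : 𝒳 → ℝ) (d : 𝒳 → 𝒴 → ℝ) (D R : ℝ) (n : ℕ)
    (τ : RandCode (Fin n → 𝒳) (Fin (nMsg R n)) (Fin (nMsg R n)) (Fin n → 𝒴))
    (σ : RandCode (Fin (nMsg R n)) (Fin n → ℐ) (Fin n → 𝒪) (Option (Fin (nMsg R n))))
    (yerr : Fin n → 𝒴) (k : Channel ℐ 𝒪) : ℝ :=
  ∑ sc, τ.p sc * ∑ cc, σ.p cc * ∑ x, iidP pX n x *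
    ∑ o, k.k n (cc.1 (sc.1 x)) o *
      (if (n : ℝ) * D < dPow d n x ((cc.2 o).elim yerr sc.2) then 1 else 0)

lemma IsDist.nonempty {α : Type} [Fintype α] {p : α → ℝ} (hp : IsDist p) : Nonempty α := by
  by_contra h
  rw [not_nonempty_iff] at h
  simpa using hp.2

lemma isDist_iidP {pX : 𝒳 → ℝ} (hpX : IsDist pX) (n : ℕ) : IsDist (iidP pX n) := by
  refine ⟨fun x => Finset.prod_nonneg fun t _ => hpX.1 _, ?_⟩
  have h := (Fintype.prod_sum (fun (_ : Fin n) (a : 𝒳) => pX a)).symm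
  simpa [iidP, hpX.2] using h

/-- The push-forward of a pmf `p` along `g`: it is again a pmf, and averages against it are
averages of the composition with `g` against `p`. -/
lemma exists_pushforward {α β : Type} [Fintype α] [Fintype β] {p : α → ℝ} (hp : IsDist p)
    (g : α → β) : ∃ q : β → ℝ, IsDist q ∧ ∀ f : β → ℝ, ∑ b, q b * f b = ∑ a, p a * f (g a) := by
  classical
  have key : ∀ f : β → ℝ,
      ∑ b, (∑ a, if g a = b then p a else 0) * f b = ∑ a, p a * f (g a) := by
    intro f
    simp_rw [Finset.sum_mul]
    rw [Finset.sum_comm]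
    simp
  refine ⟨fun b => ∑ a, if g a = b then p a else 0, ⟨fun b => Finset.sum_nonneg fun a _ => ?_, ?_⟩,
    key⟩
  · split_ifs
    · exact hp.1 a
    · exact le_rfl
  · simpa [hp.2] using key fun _ => 1

lemma nMsg_pos (R : ℝ) (n : ℕ) : 0 < nMsg R n := by
  unfold nMsg
  positivity

lemma nMsg_mono {R' R : ℝ} (h : R' ≤ R) (n : ℕ) : nMsg R' n ≤ nMsg R n := by
  unfold nMsg
  gcongr
  norm_num

/-- A source code of rate `R'` can be used at any larger rate `R` with the same excess distortion
probability: encode into the first `nMsg R' n` messages, and decode the remaining messages, which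
are never sent, in an arbitrary way. -/
lemma exists_srcExcess_eq (pX : 𝒳 → ℝ) (d : 𝒳 → 𝒴 → ℝ) (D : ℝ) {R' R : ℝ} (h : R' ≤ R) (n : ℕ)
    (τ : RandCode (Fin n → 𝒳) (Fin (nMsg R' n)) (Fin (nMsg R' n)) (Fin n → 𝒴)) :
    ∃ τ' : RandCode (Fin n → 𝒳) (Fin (nMsg R n)) (Fin (nMsg R n)) (Fin n → 𝒴),
      srcExcess pX d D R n τ' = srcExcess pX d D R' n τ := by
  obtain ⟨q, hq, hsum⟩ := exists_pushforward τ.isDist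
    (fun ef => ((fun x => Fin.castLE (nMsg_mono h n) (ef.1 x),
      fun m => if hm : m.1 < nMsg R' n then ef.2 ⟨m.1, hm⟩ else ef.2 ⟨0, nMsg_pos R' n⟩) :
      ((Fin n → 𝒳) → Fin (nMsg R n)) × (Fin (nMsg R n) → Fin n → 𝒴)))
  refine ⟨⟨q, hq⟩, ?_⟩
  unfold srcExcess
  rw [hsum]
  simp

/-- Union bound for the separation architecture: excess distortion end to end requires excess
distortion of the source code or an error of the channel code, and the latter has probability at
most `δ` whatever the message. -/
lemma sepExcess_le {pX : 𝒳 → ℝ} (hpX : IsDist pX) (d : 𝒳 → 𝒴 → ℝ) (D R : ℝ) (n : ℕ)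
    (τ : RandCode (Fin n → 𝒳) (Fin (nMsg R n)) (Fin (nMsg R n)) (Fin n → 𝒴))
    (σ : RandCode (Fin (nMsg R n)) (Fin n → ℐ) (Fin n → 𝒪) (Option (Fin (nMsg R n))))
    (yerr : Fin n → 𝒴) (k : Channel ℐ 𝒪) {δ : ℝ} (hδ : ∀ m, chErr R n σ k m ≤ δ) :
    sepExcess pX d D R n τ σ yerr k ≤ srcExcess pX d D R n τ + δ := by
  have hP := isDist_iidP hpX n
  -- It suffices to average, over the source code and the source block, the bound obtained for a
  -- fixed pair; the average over the channel code is moved inside for this purpose.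
  have hfix : ∀ (sc : ((Fin n → 𝒳) → Fin (nMsg R n)) × (Fin (nMsg R n) → Fin n → 𝒴))
      (x : Fin n → 𝒳),
      ∑ cc, σ.p cc * ∑ o, k.k n (cc.1 (sc.1 x)) o *
        (if (n : ℝ) * D < dPow d n x ((cc.2 o).elim yerr sc.2) then 1 else 0) ≤
      (if (n : ℝ) * D < dPow d n x (sc.2 (sc.1 x)) then 1 else 0) + δ := by
    intro sc x
    set s : ℝ := if (n : ℝ) * D < dPow d n x (sc.2 (sc.1 x)) then 1 else 0 with hs
    have hs0 : 0 ≤ s := by rw [hs]; split_ifs <;> norm_num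
    calc _ ≤ ∑ cc, σ.p cc * ∑ o, k.k n (cc.1 (sc.1 x)) o *
            (s + if cc.2 o = some (sc.1 x) then 0 else 1) := by
          refine Finset.sum_le_sum fun cc _ => mul_le_mul_of_nonneg_left
            (Finset.sum_le_sum fun o _ => mul_le_mul_of_nonneg_left ?_ ((k.isChan n _).1 o))
            (σ.isDist.1 cc)
          by_cases hc : cc.2 o = some (sc.1 x)
          · simp [hc, hs]
          · rw [if_neg hc]
            split_ifs <;> linarith
      _ = s + chErr R n σ k (sc.1 x) := by
          simp only [mul_add, Finset.sum_add_distrib, ← Finset.sum_mul, (k.isChan n _).2,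
            σ.isDist.2, one_mul, chErr]
      _ ≤ s + δ := by linarith [hδ (sc.1 x)]
  have hswap : sepExcess pX d D R n τ σ yerr k = ∑ sc, τ.p sc * ∑ x, iidP pX n x *
      ∑ cc, σ.p cc * ∑ o, k.k n (cc.1 (sc.1 x)) o *
        (if (n : ℝ) * D < dPow d n x ((cc.2 o).elim yerr sc.2) then 1 else 0) := by
    unfold sepExcess
    refine Finset.sum_congr rfl fun sc _ => ?_
    congr 1
    simp_rw [Finset.mul_sum]
    rw [Finset.sum_comm]
    refine Finset.sum_congr rfl fun x _ => Finset.sum_congr rfl fun cc _ =>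
      Finset.sum_congr rfl fun o _ => ?_
    ring
  rw [hswap]
  calc _ ≤ ∑ sc, τ.p sc * ∑ x, iidP pX n x *
          ((if (n : ℝ) * D < dPow d n x (sc.2 (sc.1 x)) then 1 else 0) + δ) :=
        Finset.sum_le_sum fun sc _ => mul_le_mul_of_nonneg_left
          (Finset.sum_le_sum fun x _ => mul_le_mul_of_nonneg_left (hfix sc x) (hP.1 x))
          (τ.isDist.1 sc)
    _ = srcExcess pX d D R n τ + δ := by
        simp only [mul_add, Finset.sum_add_distrib, ← Finset.sum_mul, hP.2, τ.isDist.2, one_mul,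
          srcExcess]

/-- If random codes are permitted, `D ≥ 0`, and some rate `R > R^P_X(D)` is
reliably achievable over the compound channel `𝒜` with random codes, then the i.i.d. `X`
source can be communicated over `𝒜` to within distortion `D` (probability-of-excess-distortion
criterion, uniformly over `k ∈ 𝒜`) by a separation architecture: encoder–decoder pairs of the
form `(e_s ∘ e_c, f_c ∘ f_s)` composed of a source code and a channel code. -/
theorem stmt1 (pX : 𝒳 → ℝ) (hpX : IsDist pX)
    (d : 𝒳 → 𝒴 → ℝ) (hd : ∀ x y, 0 ≤ d x y)
    (D : ℝ) (hD : 0 ≤ D)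
    (𝒜 : Set (Channel ℐ 𝒪))
    (R : ℝ) (hR0 : 0 < R) (hR : RP pX d D < ENNReal.ofReal R)
    (hach : ReliablyAchievable 𝒜 R) :
    ∃ (τ : ∀ n : ℕ, RandCode (Fin n → 𝒳) (Fin (nMsg R n)) (Fin (nMsg R n)) (Fin n → 𝒴))
      (σ : ∀ n : ℕ,
        RandCode (Fin (nMsg R n)) (Fin n → ℐ) (Fin n → 𝒪) (Option (Fin (nMsg R n))))
      (yerr : ∀ n : ℕ, Fin n → 𝒴) (ω : ℕ → ℝ),
      Tendsto ω atTop (nhds 0) ∧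
      ∀ n : ℕ, ∀ k ∈ 𝒜, sepExcess pX d D R n (τ n) (σ n) (yerr n) k ≤ ω n := by
  obtain ⟨_, ⟨R', _, ⟨τ₀, hτ₀⟩, rfl⟩, hlt⟩ := sInf_lt_iff.1 hR
  have hle : R' ≤ R := ((ENNReal.ofReal_lt_ofReal_iff hR0).1 hlt).le
  choose τ hτ using fun n => exists_srcExcess_eq pX d D hle n (τ₀ n)
  obtain ⟨σ, δ, hδ, hσ⟩ := hach
  -- The alphabet `𝒴` may be empty; a reproduction block is taken from a decoder of the source code.
  have hy : ∀ n, Nonempty (Fin n → 𝒴) := fun n =>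
    (τ n).isDist.nonempty.map fun ef => ef.2 ⟨0, nMsg_pos R n⟩
  refine ⟨τ, σ, fun n => (hy n).some, fun n => srcExcess pX d D R n (τ n) + δ n, ?_,
    fun n k hk => sepExcess_le hpX d D R n (τ n) (σ n) _ k (hσ n k hk)⟩
  simp_rw [hτ]
  simpa using hτ₀.add hδ

end
end
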